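/- Let G be a finitely generated group and H a finitely generated autostackable subgroup of G. If the pair (G,H) is strongly prefix-closed coset automatic over some finite inverse-closed generating set of G, then G is autostackable respecting H. -/

import Mathlib

/-!
Let `L` be the prefix-closed regular transversal, viewed as a subtree of the Schreier graph of
`H \ G`, and let `N` be the normal forms of the autostackable structure of `H`. The normal forms
of `G` are the words `u ++ v` with `u ∈ N` and `v ∈ L`, written with disjoint alphabets for the two
factors. The generating set of `G` is enlarged by a letter for each nontrivial element of the ball
`F` whose radius is the fellow traveler constant; this is harmless for `L`, since no word of `L`
uses the new letters.

The stacking function on an edge of the Cayley graph labelled `x` and starting at `u ++ v` depends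
on `v` and `x` only, except inside `H`, where the stacking function of `H` is used. An edge of the
tree of normal forms keeps its label. For any other edge let `w ∈ L` represent the coset of `v *
x`, say `v * x = h * w`. If `v` and `w` travel within `F` of each other (the edge is good), the
edge is replaced by one step back along `v`, one letter of `F` across, and one step forward along
`w`; when `v` and `w` are both empty the edge joins two elements of `H` and is replaced by a word
over the generators of `H`. Every remaining edge is replaced by a word in the original generators
of `G`, whose edges are all good by the fellow traveler property.

Termination (`CosetSetup.phi_F3`): an edge is followed by good edges or by edges inside `H`; along
good edges the time `max |v| |w|` strictly decreases (`CosetSetup.detour_step`), so an infinite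
sequence would eventually stay inside `H`, contradicting termination there.

Regularity: the stacking function takes finitely many values, so it suffices that its fibres are
regular (`sync_of_sections`). The essential input is `reg_pair`: an automaton reading `v` can
follow all candidates for `w` simultaneously, because up to translation by `H` they differ from
`v` by one of the finitely many elements of `F`. Regular languages are handled through finite
right-invariant functions (`reg_of_fin`, `fin_of_reg`).
-/

/-- Evaluation of a word over an alphabet `α` in a monoid `G` via a letter map `π`. -/
def wordVal {G : Type} [Monoid G] {α : Type} (π : α → G) (w : List α) : G :=
  (w.map π).prod

/-- A language is prefix-closed if it contains every prefix of each of its words. -/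
def PrefixClosed {α : Type} (N : Set (List α)) : Prop :=
  ∀ w ∈ N, ∀ p : List α, p <+: w → p ∈ N

/-- `(α, π, inv)` is a finite inverse-closed generating set for the group `G`:
no letter represents the identity, `inv` is an involution with `π (inv a) = (π a)⁻¹`,
and the letters generate `G`. -/
structure IsInvGenSet (G : Type) [Group G] {α : Type} (π : α → G) (inv : α → α) : Prop where
  ne_one : ∀ a, π a ≠ 1
  inv_invol : ∀ a, inv (inv a) = a
  val_inv : ∀ a, π (inv a) = (π a)⁻¹
  gen : Subgroup.closure (Set.range π) = ⊤

/-- A language over `α` is regular if it is accepted by a finite state automaton. -/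
def IsRegularLang {α : Type} (L : Set (List α)) : Prop :=
  ∃ (σ : Type) (_ : Fintype σ) (M : DFA α σ), M.accepts = L

/-- The padded word over `(α ∪ {$})²` corresponding to a pair of words;
`none` plays the role of the padding symbol `$`. -/
def padWord2 {α : Type} (p : List α × List α) : List (Option α × Option α) :=
  (List.range (max p.1.length p.2.length)).map (fun i => (p.1[i]?, p.2[i]?))

/-- Synchronous regularity of a set of pairs of words. -/
def SyncRegular2 {α : Type} (L : Set (List α × List α)) : Prop :=
  IsRegularLang (padWord2 '' L)

/-- The padded word over `(α ∪ {$})³` corresponding to a triple of words. -/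
def padWord3 {α : Type} (p : List α × List α × List α) :
    List (Option α × Option α × Option α) :=
  (List.range (max p.1.length (max p.2.1.length p.2.2.length))).map
    (fun i => (p.1[i]?, p.2.1[i]?, p.2.2[i]?))

/-- Synchronous regularity of a set of triples of words. -/
def SyncRegular3 {α : Type} (L : Set (List α × List α × List α)) : Prop :=
  IsRegularLang (padWord3 '' L)

structure StackingData (α : Type) where
  N : Set (List α)
  K : ℕ
  phi : List α → α → List α

/-- `st` is a stackable structure for `G` over the finite inverse-closed generating
set `(α, π, inv)`. -/
structure IsStacking (G : Type) [Group G] {α : Type} (π : α → G) (inv : α → α)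
    (st : StackingData α) : Prop where
  gen : IsInvGenSet G π inv
  nf : ∀ g : G, ∃! w, w ∈ st.N ∧ wordVal π w = g
  prefixClosed : PrefixClosed st.N
  F1 : ∀ y ∈ st.N, ∀ a : α, wordVal π (st.phi y a) = π a ∧ (st.phi y a).length ≤ st.K
  F2 : ∀ y ∈ st.N, ∀ a : α, (y ++ [a] ∈ st.N ∨ ∃ y', y = y' ++ [inv a]) → st.phi y a = [a]
  F3 : ¬ ∃ seq : ℕ → List α × α,
      ∀ i : ℕ, (seq i).1 ∈ st.N ∧ (seq i).1 ++ [(seq i).2] ∉ st.N ∧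
        (¬ ∃ y', (seq i).1 = y' ++ [inv (seq i).2]) ∧
        ∃ u u' : List α, st.phi (seq i).1 (seq i).2 = u ++ (seq (i+1)).2 :: u' ∧
          (seq (i+1)).1 ∈ st.N ∧
          wordVal π ((seq (i+1)).1) = wordVal π ((seq i).1 ++ u)

/-- The regularity conditions making a stackable structure autostackable:
the set of normal forms is regular and the graph of the stacking function is
synchronously regular. -/
def StackingData.IsAuto {α : Type} (st : StackingData α) : Prop :=
  IsRegularLang st.N ∧
  SyncRegular3 {t : List α × List α × List α | ∃ y ∈ st.N, ∃ a : α, t = (y, [a], st.phi y a)}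

/-- The stacking structure `st` respects the subgroup `H`. -/
def RespectsSubgroup {G : Type} [Group G] {α : Type} (π : α → G) (inv : α → α)
    (st : StackingData α) (H : Subgroup G) : Prop :=
  ∃ B : Set α,
    (∀ b ∈ B, inv b ∈ B) ∧
    (∀ b ∈ B, π b ∈ H) ∧
    Subgroup.closure (π '' B) = H ∧
    ∃ NH NTr : Set (List α),
      (∀ w ∈ NH, ∀ b ∈ w, b ∈ B) ∧
      PrefixClosed NH ∧
      (∀ h : G, h ∈ H → ∃! w, w ∈ NH ∧ wordVal π w = h) ∧
      PrefixClosed NTr ∧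
      (∀ g : G, ∃! w, w ∈ NTr ∧ wordVal π w * g⁻¹ ∈ H) ∧
      st.N = {w | ∃ u ∈ NH, ∃ v ∈ NTr, w = u ++ v} ∧
      (∀ y ∈ st.N, wordVal π y ∈ H → ∀ b ∈ B, ∀ c ∈ st.phi y b, c ∈ B) ∧
      (∀ a : α, ∀ y ∈ st.N, ∀ y' ∈ st.N,
        ¬(wordVal π y ∈ H ∧ a ∈ B) →
        (∃ h ∈ H, wordVal π y' = h * wordVal π y) → st.phi y' a = st.phi y a)

/-- A group is autostackable if it admits an autostackable structure over some
finite inverse-closed generating set. -/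
def Autostackable (G : Type) [Group G] : Prop :=
  ∃ (α : Type) (_ : Fintype α) (π : α → G) (inv : α → α) (st : StackingData α),
    IsStacking G π inv st ∧ st.IsAuto

/-- A group is stackable if it admits a stackable structure over some
finite inverse-closed generating set. -/
def Stackable (G : Type) [Group G] : Prop :=
  ∃ (α : Type) (_ : Fintype α) (π : α → G) (inv : α → α) (st : StackingData α),
    IsStacking G π inv st

/-- `G` is autostackable respecting the subgroup `H`. -/
def AutostackableRespecting (G : Type) [Group G] (H : Subgroup G) : Prop :=
  ∃ (α : Type) (_ : Fintype α) (π : α → G) (inv : α → α) (st : StackingData α),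
    IsStacking G π inv st ∧ st.IsAuto ∧ RespectsSubgroup π inv st H

/-- `G` is stackable respecting the subgroup `H`. -/
def StackableRespecting (G : Type) [Group G] (H : Subgroup G) : Prop :=
  ∃ (α : Type) (_ : Fintype α) (π : α → G) (inv : α → α) (st : StackingData α),
    IsStacking G π inv st ∧ RespectsSubgroup π inv st H

/-- The word metric on `G` with respect to the generating set `(α, π)`. -/
noncomputable def wordDist {G : Type} [Group G] {α : Type} (π : α → G) (g g' : G) : ℕ :=
  sInf {n : ℕ | ∃ w : List α, wordVal π w = g⁻¹ * g' ∧ w.length = n}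

/-- The language `L` satisfies the `H`-coset `K`-fellow traveler property. -/
def CosetFellowTraveler {G : Type} [Group G] {α : Type} (π : α → G) (H : Subgroup G)
    (K : ℕ) (L : Set (List α)) : Prop :=
  ∀ v ∈ L, ∀ w ∈ L, ∀ h ∈ H,
    wordDist π (wordVal π v) (h * wordVal π w) ≤ 1 →
    ∀ i : ℕ, wordDist π (wordVal π (v.take i)) (h * wordVal π (w.take i)) ≤ K

/-- The pair `(G, H)` is strongly coset automatic over the generating set `(α, π, inv)`. -/
def StronglyCosetAutomatic {G : Type} [Group G] {α : Type}
    (π : α → G) (inv : α → α) (H : Subgroup G) : Prop :=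
  IsInvGenSet G π inv ∧
  ∃ (K : ℕ) (L : Set (List α)),
    IsRegularLang L ∧
    (∀ g : G, ∃ w ∈ L, wordVal π w * g⁻¹ ∈ H) ∧
    CosetFellowTraveler π H K L

/-- The pair `(G, H)` is strongly prefix-closed coset automatic over `(α, π, inv)`:
the regular language is in addition prefix-closed and contains exactly one
representative of each right coset of `H` in `G`. -/
def StronglyPrefixClosedCosetAutomatic {G : Type} [Group G] {α : Type}
    (π : α → G) (inv : α → α) (H : Subgroup G) : Prop :=
  IsInvGenSet G π inv ∧
  ∃ (K : ℕ) (L : Set (List α)),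
    IsRegularLang L ∧ PrefixClosed L ∧
    (∀ g : G, ∃! w, w ∈ L ∧ wordVal π w * g⁻¹ ∈ H) ∧
    CosetFellowTraveler π H K L

/-! ### Regular languages through finite right-invariant functions -/

/-- A language is regular as soon as membership factors through a function with finitely many
values that is compatible with appending a letter (Myhill–Nerode). -/
theorem reg_of_fin {α σ : Type} [Finite σ] (f : List α → σ) {L : Set (List α)}
    (hL : ∀ v v', f v = f v' → v ∈ L → v' ∈ L)
    (hs : ∀ v v' a, f v = f v' → f (v ++ [a]) = f (v' ++ [a])) : IsRegularLang L := by
  classical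
  let M : DFA α σ :=
    { step := fun s a => if h : ∃ v, f v = s then f (h.choose ++ [a]) else s
      start := f []
      accept := {s | ∃ v ∈ L, f v = s} }
  have he : ∀ w, M.eval w = f w := by
    intro w
    induction w using List.reverseRecOn with
    | nil => rfl
    | append_singleton w a ih =>
      rw [DFA.eval_append_singleton, ih]
      have h : ∃ v, f v = f w := ⟨w, rfl⟩
      change (if h : ∃ v, f v = f w then f (h.choose ++ [a]) else f w) = _
      rw [dif_pos h]
      exact hs _ _ _ h.choose_spec
  refine ⟨σ, Fintype.ofFinite σ, M, ?_⟩
  ext w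
  change M.eval w ∈ M.accept ↔ _
  rw [he]
  constructor
  · rintro ⟨v, hv, hvw⟩
    exact hL _ _ hvw hv
  · intro hw
    exact ⟨w, hw, rfl⟩

/-- Converse of `reg_of_fin`: the function is the state reached by an automaton. -/
theorem fin_of_reg {α : Type} {L : Set (List α)} (h : IsRegularLang L) :
    ∃ (σ : Type) (_ : Finite σ) (f : List α → σ),
      (∀ v v', f v = f v' → v ∈ L → v' ∈ L) ∧
      (∀ v v' a, f v = f v' → f (v ++ [a]) = f (v' ++ [a])) := by
  obtain ⟨σ, _, M, rfl⟩ := h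
  refine ⟨σ, inferInstance, M.eval, ?_, ?_⟩
  · intro v v' h hv
    change M.eval v' ∈ M.accept
    rw [← h]
    exact hv
  · intro v v' a h
    rw [DFA.eval_append_singleton, DFA.eval_append_singleton, h]

theorem inv_append {α σ : Type} {f : List α → σ}
    (hs : ∀ v v' a, f v = f v' → f (v ++ [a]) = f (v' ++ [a])) (u : List α) :
    ∀ v v', f v = f v' → f (v ++ u) = f (v' ++ u) := by
  induction u with
  | nil => intro v v' h; simpa using h
  | cons a u ih =>
    intro v v' h
    have := ih _ _ (hs v v' a h)
    simpa using this

theorem reg_not {α : Type} {P : List α → Prop} (h : IsRegularLang {v | P v}) :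
    IsRegularLang {v | ¬ P v} := by
  obtain ⟨σ, _, f, h1, h2⟩ := fin_of_reg h
  exact reg_of_fin f (fun v v' e hv hv' => hv (h1 _ _ e.symm hv')) h2

theorem reg_exists {α ι : Type} [Finite ι] {P : ι → List α → Prop}
    (h : ∀ i, IsRegularLang {v | P i v}) : IsRegularLang {v | ∃ i, P i v} := by
  choose σ hσ f h1 h2 using fun i => fin_of_reg (h i)
  refine reg_of_fin (fun v i => f i v) ?_ ?_
  · rintro v v' e ⟨i, hi⟩
    exact ⟨i, h1 i _ _ (congrFun e i) hi⟩
  · intro v v' a e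
    funext i
    exact h2 i _ _ _ (congrFun e i)

theorem reg_and {α : Type} {P Q : List α → Prop} (hP : IsRegularLang {v | P v})
    (hQ : IsRegularLang {v | Q v}) : IsRegularLang {v | P v ∧ Q v} := by
  obtain ⟨σ, _, f, h1, h2⟩ := fin_of_reg hP
  obtain ⟨τ, _, g, h3, h4⟩ := fin_of_reg hQ
  refine reg_of_fin (fun v => (f v, g v)) ?_ ?_
  · rintro v v' e ⟨hp, hq⟩
    exact ⟨h1 _ _ (congrArg Prod.fst e) hp, h3 _ _ (congrArg Prod.snd e) hq⟩
  · intro v v' a e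
    exact Prod.ext (h2 _ _ _ (congrArg Prod.fst e)) (h4 _ _ _ (congrArg Prod.snd e))

theorem reg_or {α : Type} {P Q : List α → Prop} (hP : IsRegularLang {v | P v})
    (hQ : IsRegularLang {v | Q v}) : IsRegularLang {v | P v ∨ Q v} := by
  have := reg_not (reg_and (reg_not hP) (reg_not hQ))
  refine (congrArg IsRegularLang ?_).mp this
  ext v
  simp only [Set.mem_ofPred_eq]
  tauto

theorem reg_const {α : Type} (p : Prop) : IsRegularLang {_v : List α | p} :=
  reg_of_fin (fun _ => ()) (fun _ _ _ h => h) (fun _ _ _ _ => rfl)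

theorem reg_ite {α : Type} {C P Q : List α → Prop} (hC : IsRegularLang {v | C v})
    (hP : IsRegularLang {v | P v}) (hQ : IsRegularLang {v | Q v}) :
    IsRegularLang {v | (C v ∧ P v) ∨ (¬ C v ∧ Q v)} :=
  reg_or (reg_and hC hP) (reg_and (reg_not hC) hQ)

theorem reg_congr {α : Type} {P Q : List α → Prop} (hP : IsRegularLang {v | P v})
    (h : ∀ v, Q v ↔ P v) : IsRegularLang {v | Q v} := by
  have : {v | Q v} = {v | P v} := Set.ext h
  rwa [this]

theorem reg_filterMap {α β : Type} (g : α → Option β) {R : Set (List β)}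
    (h : IsRegularLang R) : IsRegularLang {v | v.filterMap g ∈ R} := by
  obtain ⟨σ, _, f, h1, h2⟩ := fin_of_reg h
  refine reg_of_fin (fun v => f (v.filterMap g)) (fun v v' e => h1 _ _ e) ?_
  intro v v' a e
  simp only [List.filterMap_append]
  exact inv_append h2 _ _ _ e

/-- Right quotient by a letter. -/
theorem reg_quot {α : Type} (a : α) {R : Set (List α)} (h : IsRegularLang R) :
    IsRegularLang {v | v ++ [a] ∈ R} := by
  obtain ⟨σ, _, f, h1, h2⟩ := fin_of_reg h
  exact reg_of_fin f (fun v v' e => h1 _ _ (h2 _ _ _ e)) h2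

theorem reg_getLast {α : Type} [Finite α] (e : Option α) :
    IsRegularLang {v : List α | v.getLast? = e} := by
  refine reg_of_fin List.getLast? ?_ ?_
  · intro v v' h hv
    exact h.symm.trans hv
  · intro v v' a _
    simp

theorem reg_nil {α : Type} : IsRegularLang {v : List α | v = []} := by
  refine reg_of_fin (fun v => decide (v.length = 0)) ?_ ?_
  · intro v v' h hv
    simp only [Set.mem_ofPred_eq] at hv ⊢
    subst hv
    simpa using h
  · intro v v' a _
    simp

/-- The words shorter than `M` cause no trouble: regularity can be checked with a function that
is only controlled on words of length at least `M`. -/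
theorem reg_of_fin_long {α σ : Type} [Finite α] [Finite σ] (M : ℕ) (f : List α → σ)
    {L : Set (List α)}
    (hL : ∀ v v', M ≤ v.length → M ≤ v'.length → f v = f v' → v ∈ L → v' ∈ L)
    (hs : ∀ v v' a, M ≤ v.length → M ≤ v'.length → f v = f v' →
      f (v ++ [a]) = f (v' ++ [a])) : IsRegularLang L := by
  classical
  have hfin : Finite {v : List α // v.length < M} := (List.finite_length_lt α M).to_subtype
  let g : List α → {v : List α // v.length < M} ⊕ σ :=
    fun v => if h : v.length < M then Sum.inl ⟨v, h⟩ else Sum.inr (f v)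
  have key : ∀ v v', g v = g v' →
      v = v' ∨ (M ≤ v.length ∧ M ≤ v'.length ∧ f v = f v') := by
    intro v v' h
    simp only [g] at h
    split_ifs at h with h1 h2 h2
    · left
      simpa using h
    · right
      exact ⟨by omega, by omega, by simpa using h⟩
  refine reg_of_fin g ?_ ?_
  · intro v v' h hv
    rcases key v v' h with rfl | ⟨h1, h2, h3⟩
    · exact hv
    · exact hL _ _ h1 h2 h3 hv
  · intro v v' a h
    rcases key v v' h with rfl | ⟨h1, h2, h3⟩
    · rfl
    · have e1 : ¬ (v ++ [a]).length < M := by simp; omega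
      have e2 : ¬ (v' ++ [a]).length < M := by simp; omega
      simp only [g, dif_neg e1, dif_neg e2]
      rw [hs _ _ _ h1 h2 h3]

/-- A language in which long words are extended by appending exactly the letters of `C`. -/
theorem reg_of_long_step {α : Type} [Finite α] (M : ℕ) {L : Set (List α)} (C : Set α)
    (h : ∀ t c, M ≤ t.length → (t ++ [c] ∈ L ↔ t ∈ L ∧ c ∈ C)) : IsRegularLang L := by
  refine reg_of_fin_long M (fun t => t ∈ L) ?_ ?_
  · intro v v' _ _ e hv
    exact e.mp hv
  · intro v v' a h1 h2 e
    simp only [eq_iff_iff] at e ⊢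
    rw [h _ _ h1, h _ _ h2, e]

theorem reg_map_inj {α β : Type} [Finite β] (g : α → β) (hg : Function.Injective g)
    {R : Set (List α)} (h : IsRegularLang R) : IsRegularLang (List.map g '' R) := by
  classical
  let k : β → Option α := fun b => if h : ∃ a, g a = b then some h.choose else none
  have hk : ∀ a, k (g a) = some a := by
    intro a
    have h : ∃ a', g a' = g a := ⟨a, rfl⟩
    simp only [k, dif_pos h]
    rw [hg h.choose_spec]
  have hk2 : ∀ v : List α, (v.map g).filterMap k = v := by
    intro v
    rw [List.filterMap_map]
    have : k ∘ g = some := funext hk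
    rw [this, List.filterMap_some]
  have h2 : IsRegularLang {w : List β | ∀ b ∈ w, b ∈ Set.range g} := by
    refine reg_of_long_step 0 (Set.range g) ?_
    intro t c _
    simp only [Set.mem_ofPred_eq, List.mem_append, List.mem_singleton]
    constructor
    · intro h
      exact ⟨fun b hb => h b (Or.inl hb), h c (Or.inr rfl)⟩
    · rintro ⟨h1, h2⟩ b (hb | rfl)
      · exact h1 b hb
      · exact h2
  refine reg_congr (Q := fun w => w ∈ List.map g '' R)
    (reg_and (reg_filterMap k h) h2) ?_
  intro w
  constructor
  · rintro ⟨v, hv, rfl⟩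
    refine ⟨?_, ?_⟩
    · rw [hk2]; exact hv
    · intro b hb
      obtain ⟨a, -, rfl⟩ := List.mem_map.mp hb
      exact ⟨a, rfl⟩
  · rintro ⟨h1, h2⟩
    refine ⟨_, h1, ?_⟩
    obtain ⟨v, rfl⟩ : ∃ v : List α, v.map g = w := by
      have : w ∈ Set.range (List.map g) := by
        rw [Set.range_list_map]
        exact h2
      exact this
    rw [hk2]

/-! ### Synchronously regular graphs with bounded values -/

/-- Once the first tape is the longest, lengthening it only appends a letter to the padded word. -/
theorem padWord3_append {α : Type} (y z : List α) (a c : α) (h1 : 1 ≤ y.length)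
    (hz : z.length ≤ y.length) :
    padWord3 (y ++ [c], [a], z) = padWord3 (y, [a], z) ++ [(some c, none, none)] := by
  have e1 : max (y ++ [c]).length (max [a].length z.length) = y.length + 1 := by
    simp; omega
  have e2 : max y.length (max [a].length z.length) = y.length := by
    simp; omega
  unfold padWord3
  simp only [e1, e2, List.range_succ, List.map_append, List.map_cons, List.map_nil]
  congr 1
  · apply List.map_congr_left
    intro i hi
    have : i < y.length := by simpa using hi
    simp [List.getElem?_append_left this]
  · have e3 : [a][y.length]? = none := List.getElem?_eq_none (by simpa using h1)
    have e4 : z[y.length]? = none := List.getElem?_eq_none hz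
    simp [e3, e4]

theorem padWord3_length {α : Type} (y z : List α) (a : α) :
    (padWord3 (y, [a], z)).length = max y.length (max 1 z.length) := by
  simp [padWord3]

theorem filterMap_range_getElem? {α : Type} (l : List α) (n : ℕ) (hn : l.length ≤ n) :
    (List.range n).filterMap (fun i => l[i]?) = l := by
  induction l using List.reverseRecOn generalizing n with
  | nil => simp
  | append_singleton l a ih =>
    obtain ⟨m, rfl⟩ := Nat.exists_eq_add_of_le hn
    rw [List.range_add, List.filterMap_append]
    have h2 : (List.map (fun x => (l ++ [a]).length + x) (List.range m)).filterMap
        (fun i => (l ++ [a])[i]?) = [] := by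
      rw [List.filterMap_eq_nil_iff]
      intro i hi
      simp only [List.mem_map] at hi
      obtain ⟨j, -, rfl⟩ := hi
      simp
      omega
    rw [h2, List.append_nil, List.length_append, List.length_singleton, List.range_succ,
      List.filterMap_append]
    congr 1
    · conv_rhs => rw [← ih l.length le_rfl]
      apply List.filterMap_congr
      intro i hi
      have : i < l.length := by simpa using hi
      simp [List.getElem?_append_left this]
    · simp

theorem padWord3_fst {α : Type} (y z : List α) (a : α) :
    (padWord3 (y, [a], z)).filterMap Prod.fst = y := by
  unfold padWord3
  rw [List.filterMap_map]
  exact filterMap_range_getElem? _ _ (by simp)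

theorem padWord3_inj {α : Type} {p q : List α × List α × List α}
    (h : padWord3 p = padWord3 q) : p = q := by
  have e1 : ∀ p : List α × List α × List α, (padWord3 p).filterMap Prod.fst = p.1 := by
    intro p
    unfold padWord3
    rw [List.filterMap_map]
    exact filterMap_range_getElem? _ _ (by simp)
  have e2 : ∀ p : List α × List α × List α,
      (padWord3 p).filterMap (fun t => t.2.1) = p.2.1 := by
    intro p
    unfold padWord3
    rw [List.filterMap_map]
    exact filterMap_range_getElem? _ _ (by simp)
  have e3 : ∀ p : List α × List α × List α,
      (padWord3 p).filterMap (fun t => t.2.2) = p.2.2 := by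
    intro p
    unfold padWord3
    rw [List.filterMap_map]
    exact filterMap_range_getElem? _ _ (by simp)
  refine Prod.ext ?_ (Prod.ext ?_ ?_)
  · rw [← e1, h, e1]
  · rw [← e2, h, e2]
  · rw [← e3, h, e3]

/-- Fixing the second and third tape of a synchronously regular relation gives a regular
language on the first tape. -/
theorem reg_section {α : Type} [Finite α] {Γ : Set (List α × List α × List α)}
    (h : SyncRegular3 Γ) (a : α) (z : List α) :
    IsRegularLang {y : List α | (y, [a], z) ∈ Γ} := by
  obtain ⟨σ, _, f, h1, h2⟩ := fin_of_reg h
  have hiff : ∀ p, p ∈ Γ ↔ padWord3 p ∈ padWord3 '' Γ := by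
    intro p
    constructor
    · exact fun hp => ⟨p, hp, rfl⟩
    · rintro ⟨q, hq, e⟩
      rwa [← padWord3_inj e]
  refine reg_of_fin_long (max 1 z.length) (fun y => f (padWord3 (y, [a], z))) ?_ ?_
  · intro v v' _ _ e hv
    simp only [Set.mem_ofPred_eq, hiff] at hv ⊢
    exact h1 _ _ e hv
  · intro v v' c l l' e
    rw [padWord3_append _ _ _ _ (by omega) (by omega),
      padWord3_append _ _ _ _ (by omega) (by omega)]
    exact h2 _ _ _ e

theorem reg_pad_range {α : Type} [Finite α] (a : α) (z : List α) :
    IsRegularLang {t | ∃ y : List α, padWord3 (y, [a], z) = t} := by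
  set M := max 1 z.length with hM
  have hshort : IsRegularLang {t | ∃ y : List α, y.length < M ∧ padWord3 (y, [a], z) = t} := by
    refine reg_of_long_step M ∅ ?_
    intro t c ht
    simp only [Set.mem_ofPred_eq, Set.mem_empty_iff_false, and_false, iff_false]
    rintro ⟨y, hy, e⟩
    have := congrArg List.length e
    rw [padWord3_length] at this
    simp at this
    omega
  have hlong : IsRegularLang {t | ∃ y : List α, M ≤ y.length ∧ padWord3 (y, [a], z) = t} := by
    refine reg_of_long_step M {c | ∃ x : α, c = (some x, none, none)} ?_
    intro t c ht
    simp only [Set.mem_ofPred_eq]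
    constructor
    · rintro ⟨y, hy, e⟩
      have hlen := congrArg List.length e
      rw [padWord3_length] at hlen
      simp at hlen
      rcases List.eq_nil_or_concat y with rfl | ⟨y', x, rfl⟩
      · simp at hy; omega
      · rw [List.concat_eq_append] at *
        simp at hlen hy
        rw [padWord3_append _ _ _ _ (by omega) (by omega)] at e
        have := List.append_inj' e rfl
        refine ⟨⟨y', by omega, this.1⟩, x, ?_⟩
        have := this.2
        simpa using this.symm
    · rintro ⟨⟨y, hy, rfl⟩, x, rfl⟩
      refine ⟨y ++ [x], by simp; omega, ?_⟩
      rw [padWord3_append _ _ _ _ (by omega) (by omega)]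
  refine reg_congr (reg_or hshort hlong) ?_
  intro t
  constructor
  · rintro ⟨y, e⟩
    rcases lt_or_ge y.length M with h | h
    · exact Or.inl ⟨y, h, e⟩
    · exact Or.inr ⟨y, h, e⟩
  · rintro (⟨y, -, e⟩ | ⟨y, -, e⟩) <;> exact ⟨y, e⟩

/-- A function with bounded values whose fibres are all regular has a synchronously regular
graph. -/
theorem sync_of_sections {α : Type} [Finite α] (N : Set (List α)) (K : ℕ)
    (phi : List α → α → List α) (hK : ∀ y ∈ N, ∀ a, (phi y a).length ≤ K)
    (h : ∀ a z, IsRegularLang {y | y ∈ N ∧ phi y a = z}) :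
    SyncRegular3 {t : List α × List α × List α | ∃ y ∈ N, ∃ a : α, t = (y, [a], phi y a)} := by
  have hfin : Finite {z : List α // z.length < K + 1} :=
    (List.finite_length_lt α (K + 1)).to_subtype
  have key := reg_exists (fun p : α × {z : List α // z.length < K + 1} =>
    reg_and (reg_filterMap Prod.fst (h p.1 p.2.1)) (reg_pad_range p.1 p.2.1))
  refine reg_congr (Q := fun t => t ∈ padWord3 '' _) key ?_
  intro t
  constructor
  · rintro ⟨_, ⟨y, hy, a, rfl⟩, rfl⟩
    refine ⟨(a, ⟨phi y a, Nat.lt_succ_of_le (hK y hy a)⟩), ?_, y, rfl⟩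
    simp only [Set.mem_ofPred_eq, padWord3_fst]
    exact ⟨hy, trivial⟩
  · rintro ⟨⟨a, z, hz⟩, h1, y, rfl⟩
    simp only [Set.mem_ofPred_eq, padWord3_fst] at h1
    obtain ⟨hy, rfl⟩ := h1
    exact ⟨_, ⟨y, hy, a, rfl⟩, rfl⟩

/-! ### Words and their values -/

theorem wordVal_nil {G : Type} [Monoid G] {α : Type} (π : α → G) : wordVal π [] = 1 := rfl

theorem wordVal_append {G : Type} [Monoid G] {α : Type} (π : α → G) (u v : List α) :
    wordVal π (u ++ v) = wordVal π u * wordVal π v := by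
  simp [wordVal]

theorem wordVal_cons {G : Type} [Monoid G] {α : Type} (π : α → G) (a : α) (v : List α) :
    wordVal π (a :: v) = π a * wordVal π v := by
  simp [wordVal]

theorem wordVal_singleton {G : Type} [Monoid G] {α : Type} (π : α → G) (a : α) :
    wordVal π [a] = π a := by
  simp [wordVal]

theorem wordVal_map {G : Type} [Monoid G] {α β : Type} (π : β → G) (f : α → β) (v : List α) :
    wordVal π (v.map f) = wordVal (fun a => π (f a)) v := by
  simp [wordVal, Function.comp_def]

theorem wordVal_reverse_inv {G : Type} [Group G] {α : Type} {π : α → G} {inv : α → α}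
    (hi : ∀ a, π (inv a) = (π a)⁻¹) (w : List α) :
    wordVal π (w.reverse.map inv) = (wordVal π w)⁻¹ := by
  induction w with
  | nil => simp [wordVal]
  | cons a w ih =>
    rw [List.reverse_cons, List.map_append, wordVal_append, ih, wordVal_cons]
    simp [wordVal, hi]

theorem exists_word {G : Type} [Group G] {α : Type} {π : α → G} {inv : α → α}
    (hg : IsInvGenSet G π inv) (g : G) : ∃ w : List α, wordVal π w = g := by
  have hmem : g ∈ Subgroup.closure (Set.range π) := by rw [hg.gen]; trivial
  induction hmem using Subgroup.closure_induction with
  | mem x hx =>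
    obtain ⟨a, rfl⟩ := hx
    exact ⟨[a], wordVal_singleton π a⟩
  | one => exact ⟨[], rfl⟩
  | mul x y _ _ hx hy =>
    obtain ⟨u, rfl⟩ := hx
    obtain ⟨v, rfl⟩ := hy
    exact ⟨u ++ v, wordVal_append π u v⟩
  | inv x _ hx =>
    obtain ⟨u, rfl⟩ := hx
    exact ⟨_, wordVal_reverse_inv hg.val_inv u⟩

/-! ### Regularity of synchronous fellow-travelling -/

/-- The words `v` for which some `w` in a regular language stays, up to translation by an element
of `H`, within the finite set `F` of `v` and ends at `v * x`. The finite invariant attached to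
`v` records, over all candidates `w` no longer than `v`, the automaton state of `w`, the current
difference, and whether `w` is exactly as long as `v` (only such `w` may still grow).
The parameter `o` compares the lengths of `w` and `v`. -/
theorem reg_pair {G : Type} [Group G] {E : Type} (π : E → G) (H : Subgroup G) (F : Set G)
    (hF : F.Finite) {LC : Set (List E)} (hLC : IsRegularLang LC) (o : Ordering) (x : G) :
    IsRegularLang {v : List E | ∃ w ∈ LC, ∃ h ∈ H, wordVal π v * x = h * wordVal π w ∧
      compare w.length v.length = o ∧
      ∀ i, (wordVal π (v.take i))⁻¹ * h * wordVal π (w.take i) ∈ F} := by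
  classical
  obtain ⟨σ, _, q, hq1, hq2⟩ := fin_of_reg hLC
  have : Finite F := hF
  let T : List E → Set (σ × F × Prop) := fun v =>
    {p | ∃ w : List E, ∃ h ∈ H, w.length ≤ v.length ∧
      (∀ i, (wordVal π (v.take i))⁻¹ * h * wordVal π (w.take i) ∈ F) ∧
      p.1 = q w ∧ (p.2.1 : G) = (wordVal π v)⁻¹ * h * wordVal π w ∧
      p.2.2 = (w.length = v.length)}
  -- a candidate for `v` can be traded for a candidate for `v'` with the same invariant
  have swap : ∀ v v', T v = T v' → ∀ (w : List E), ∀ h ∈ H, w.length ≤ v.length →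
      (∀ i, (wordVal π (v.take i))⁻¹ * h * wordVal π (w.take i) ∈ F) →
      ∃ w' : List E, ∃ h' ∈ H, w'.length ≤ v'.length ∧
        (∀ i, (wordVal π (v'.take i))⁻¹ * h' * wordVal π (w'.take i) ∈ F) ∧
        q w = q w' ∧
        (wordVal π v)⁻¹ * h * wordVal π w = (wordVal π v')⁻¹ * h' * wordVal π w' ∧
        (w.length = v.length ↔ w'.length = v'.length) := by
    intro v v' e w h hh hl hi
    have hd : (wordVal π v)⁻¹ * h * wordVal π w ∈ F := by
      have := hi v.length
      rwa [List.take_length, List.take_of_length_le hl] at this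
    have hm : ((q w, ⟨_, hd⟩, w.length = v.length) : σ × F × Prop) ∈ T v :=
      ⟨w, h, hh, hl, hi, rfl, rfl, rfl⟩
    rw [e] at hm
    obtain ⟨w', h', hh', hl', hi', e1, e2, e3⟩ := hm
    exact ⟨w', h', hh', hl', hi', e1, e2, iff_of_eq e3⟩
  have step : ∀ v v' a, T v = T v' → T (v ++ [a]) ⊆ T (v' ++ [a]) := by
    rintro v v' a e ⟨s, ⟨d, hdF⟩, b⟩ ⟨w, h, hh, hl, hi, e1, e2, e3⟩
    simp only at e1 e2 e3
    have hpre : ∀ i, (wordVal π (v.take i))⁻¹ * h * wordVal π ((w.take v.length).take i) ∈ F := by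
      intro i
      have := hi (min i v.length)
      rw [List.take_append_of_le_length (by omega)] at this
      rw [List.take_take]
      rcases le_total i v.length with hiv | hiv
      · rwa [min_eq_left hiv] at this ⊢
      · rw [min_eq_right hiv] at this ⊢
        rw [List.take_length] at this
        rwa [List.take_of_length_le hiv]
    obtain ⟨w', h', hh', hl', hi', e1', e2', e3'⟩ :=
      swap v v' e (w.take v.length) h hh (by simp) hpre
    -- the remaining part of `w` is at most one letter
    set c := w.drop v.length with hc
    have hw : w = w.take v.length ++ c := (List.take_append_drop _ _).symm
    have hl2 : w.length ≤ v.length + 1 := by simpa using hl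
    have hclen : c.length = w.length - v.length := by simp [hc]
    have hdd : (wordVal π (v' ++ [a]))⁻¹ * h' * wordVal π (w' ++ c) = d := by
      rw [e2, hw, wordVal_append, wordVal_append, wordVal_append, wordVal_append]
      have : (wordVal π v' * wordVal π [a])⁻¹ * h' * (wordVal π w' * wordVal π c) =
          (wordVal π [a])⁻¹ * ((wordVal π v')⁻¹ * h' * wordVal π w') * wordVal π c := by group
      rw [this, ← e2']
      group
    have hw'len : c = [] ∨ w'.length = v'.length := by
      by_cases hcc : c = []
      · exact Or.inl hcc
      · right
        rw [← e3']
        have := List.length_pos_iff.mpr hcc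
        simp
        omega
    refine ⟨w' ++ c, h', hh', ?_, ?_, ?_, ?_, ?_⟩
    · rcases hw'len with h0 | h0
      · simp [h0]; omega
      · simp; omega
    · intro i
      rcases le_or_gt i v'.length with hiv | hiv
      · rw [List.take_append_of_le_length hiv]
        have : (w' ++ c).take i = w'.take i := by
          rcases hw'len with h0 | h0
          · simp [h0]
          · rw [List.take_append_of_le_length (by omega)]
        rw [this]
        exact hi' i
      · rw [List.take_of_length_le (by simp; omega), List.take_of_length_le (l := w' ++ c), hdd]
        · exact hdF
        · simp; omega
    · simp only
      rw [e1, hw]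
      exact inv_append hq2 c _ _ e1'
    · exact hdd.symm
    · simp only
      rw [e3]
      apply propext
      simp only [List.length_append, List.length_singleton]
      simp only [List.length_take] at e3'
      rcases hw'len with h0 | h0
      · rw [h0] at hclen ⊢
        simp at hclen ⊢
        omega
      · have := e3'.mpr h0
        omega
  refine reg_of_fin T ?_ ?_
  · rintro v v' e ⟨w, hw, h, hh, hx, ho, hi⟩
    have hpre : ∀ i, (wordVal π (v.take i))⁻¹ * h * wordVal π ((w.take v.length).take i) ∈ F := by
      intro i
      have := hi (min i v.length)
      rw [List.take_take]
      rcases le_total i v.length with hiv | hiv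
      · rwa [min_eq_left hiv] at this ⊢
      · rw [min_eq_right hiv] at this ⊢
        rw [List.take_length] at this
        rwa [List.take_of_length_le hiv]
    obtain ⟨w', h', hh', hl', hi', e1', e2', e3'⟩ :=
      swap v v' e (w.take v.length) h hh (by simp) hpre
    set c := w.drop v.length with hc
    have hwc : w = w.take v.length ++ c := (List.take_append_drop _ _).symm
    have hclen : c.length = w.length - v.length := by simp [hc]
    have hw'len : c = [] ∨ w'.length = v'.length := by
      by_cases hcc : c = []
      · exact Or.inl hcc
      · right
        rw [← e3']
        have := List.length_pos_iff.mpr hcc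
        simp
        omega
    refine ⟨w' ++ c, ?_, h', hh', ?_, ?_, ?_⟩
    · exact hq1 w _ (by conv_lhs => rw [hwc]
                        exact inv_append hq2 c _ _ e1') hw
    · have : x = (wordVal π v)⁻¹ * h * wordVal π (w.take v.length) * wordVal π c := by
        rw [mul_assoc, ← wordVal_append, ← hwc, mul_assoc, ← hx]
        group
      rw [this, e2', wordVal_append]
      group
    · rw [← ho]
      simp only [List.length_append]
      simp only [List.length_take] at e3'
      rcases lt_trichotomy w.length v.length with h0 | h0 | h0
      · rw [compare_lt_iff_lt.mpr h0, compare_lt_iff_lt]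
        omega
      · rw [compare_eq_iff_eq.mpr h0, compare_eq_iff_eq]
        omega
      · rw [compare_gt_iff_gt.mpr h0, compare_gt_iff_gt]
        omega
    · intro i
      rcases le_or_gt i v'.length with hiv | hiv
      · have : (w' ++ c).take i = w'.take i := by
          rcases hw'len with h0 | h0
          · simp [h0]
          · rw [List.take_append_of_le_length (by omega)]
        rw [this]
        exact hi' i
      · have e4 : (w' ++ c).take i = w' ++ c.take (i - v'.length) := by
          rcases hw'len with h0 | h0
          · simp [h0]
            omega
          · rw [List.take_append, List.take_of_length_le (by omega), h0]
        rw [List.take_of_length_le hiv.le, e4, wordVal_append, ← mul_assoc, ← e2']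
        have := hi (v.length + (i - v'.length))
        rw [List.take_of_length_le (by omega), List.take_add, wordVal_append, ← mul_assoc] at this
        exact this
  · intro v v' a e
    exact Set.Subset.antisymm (step v v' a e) (step v' v a e.symm)

/-! ### The combined data -/

/-- Everything from which the structure on `G` is built: a stacking of `H` over `β`, a
prefix-closed regular transversal `L` of `H` over a generating set `E` of `G`, and choices of words
for elements. `F` is the finite set of differences allowed between fellow-travelling words, each
of which is a letter of `E` or trivial; `A0` is the set of original letters of `E`, the
multiplication by which makes the words of `L` fellow travel within `F`. -/
structure CosetSetup (G : Type) [Group G] (H : Subgroup G) where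
  β : Type
  finβ : Finite β
  πH : β → H
  invH : β → β
  st : StackingData β
  stacking : IsStacking H πH invH st
  auto : st.IsAuto
  E : Type
  finE : Finite E
  πE : E → G
  invE : E → E
  genE : IsInvGenSet G πE invE
  L : Set (List E)
  regL : IsRegularLang L
  prefL : PrefixClosed L
  rep : G → List E
  rep_mem : ∀ g, rep g ∈ L
  rep_coset : ∀ g, g * (wordVal πE (rep g))⁻¹ ∈ H
  rep_unique : ∀ g, ∀ v ∈ L, g * (wordVal πE v)⁻¹ ∈ H → rep g = v
  F : Set G
  finF : F.Finite
  letter : G → List E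
  letter_val : ∀ g ∈ F, wordVal πE (letter g) = g
  letter_length : ∀ g, (letter g).length ≤ 1
  A0 : Set E
  aword : G → List E
  aword_mem : ∀ g, ∀ a ∈ aword g, a ∈ A0
  aword_val : ∀ g, wordVal πE (aword g) = g
  hword : G → List β
  hword_val : ∀ g ∈ H, wordVal (fun b => (πH b : G)) (hword g) = g
  fellow : ∀ a ∈ A0, ∀ v ∈ L, ∀ w ∈ L, ∀ h ∈ H, wordVal πE v * πE a = h * wordVal πE w →
    ∀ i, (wordVal πE (v.take i))⁻¹ * h * wordVal πE (w.take i) ∈ F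

namespace CosetSetup

variable {G : Type} [Group G] {H : Subgroup G} (S : CosetSetup G H)

attribute [instance] CosetSetup.finβ
attribute [instance] CosetSetup.finE

/-- The full alphabet: letters for `H` and letters for `G`, kept disjoint. -/
abbrev X : Type := S.β ⊕ S.E

/-- Values of the letters of the full alphabet. -/
def πX : S.X → G := Sum.elim (fun b => (S.πH b : G)) S.πE

/-- Formal inverses in the full alphabet. -/
def invX : S.X → S.X := Sum.map S.invH S.invE

/-- Value of a word over `E`. -/
abbrev val (v : List S.E) : G := wordVal S.πE v

/-- The representative in `L` of the coset of `v * x`. -/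
def target (v : List S.E) (x : S.E) : List S.E := S.rep (S.val v * S.πE x)

/-- The element `h` of `H` with `v * x = h * target v x`. -/
def shift (v : List S.E) (x : S.E) : G := S.val v * S.πE x * (S.val (S.target v x))⁻¹

/-- The common travelling time of `v` and `target v x`. -/
def time (v : List S.E) (x : S.E) : ℕ := max v.length (S.target v x).length

/-- The edge from `v` labelled `x` is good if `v` and the representative of its endpoint fellow
travel within `F`. -/
def Good (v : List S.E) (x : S.E) : Prop :=
  ∀ i, (S.val (v.take i))⁻¹ * S.shift v x * S.val ((S.target v x).take i) ∈ S.F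

/-- The edge from `v` labelled `x` is degenerate: it lies in the tree of normal forms. -/
def Degen (v : List S.E) (x : S.E) : Prop :=
  v ++ [x] ∈ S.L ∨ ∃ v', v = v' ++ [S.invE x]

/-- The value of an optional letter; absent letters have value `1`. -/
def oval (e : Option S.E) : G := S.val e.toList

/-- The letter traversed by a word during the last time step (if it has not stopped before). -/
def lastStep (v : List S.E) (n : ℕ) : Option S.E := v[n - 1]?

/-- Replacement for a good edge `x`: back along the last step `e` of the source word, across by one
letter of `F`, and forward along the last step `e'` of the target word. -/
def detour (x : S.E) (e e' : Option S.E) : List S.E :=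
  e.toList.map S.invE ++ (S.letter (S.oval e * S.πE x * (S.oval e')⁻¹) ++ e'.toList)

open Classical in
/-- The stacking function on edges labelled by a letter of `E`; it depends only on the
transversal part of the normal form. -/
noncomputable def psi (v : List S.E) (x : S.E) : List S.X :=
  if S.Degen v x then [Sum.inr x]
  else if S.Good v x then
    if v = [] ∧ S.target v x = [] then (S.hword (S.πE x)).map Sum.inl
    else (S.detour x (S.lastStep v (S.time v x))
      (S.lastStep (S.target v x) (S.time v x))).map Sum.inr
  else (S.aword (S.πE x)).map Sum.inr

/-- The `H`-part of a word. -/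
def hpart (y : List S.X) : List S.β := y.filterMap Sum.getLeft?

/-- The transversal part of a word. -/
def tpart (y : List S.X) : List S.E := y.filterMap Sum.getRight?

open Classical in
/-- The stacking function on `G`. -/
noncomputable def phi (y : List S.X) : S.X → List S.X
  | Sum.inl b => if S.tpart y = [] then (S.st.phi (S.hpart y) b).map Sum.inl
      else (S.aword (S.πH b)).map Sum.inr
  | Sum.inr x => S.psi (S.tpart y) x

/-- The normal forms: a normal form of `H` followed by a word of the transversal. -/
def NG : Set (List S.X) :=
  {w | ∃ u ∈ List.map Sum.inl '' S.st.N, ∃ v ∈ List.map Sum.inr '' S.L, w = u ++ v}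

/-! ### Normal forms -/

theorem hpart_inl (u : List S.β) : S.hpart (u.map Sum.inl) = u := by
  simp [hpart, List.filterMap_map, Function.comp_def]

theorem hpart_inr (v : List S.E) : S.hpart (v.map Sum.inr) = [] := by
  simp [hpart, List.filterMap_map, Function.comp_def]

theorem tpart_inl (u : List S.β) : S.tpart (u.map Sum.inl) = [] := by
  simp [tpart, List.filterMap_map, Function.comp_def]

theorem tpart_inr (v : List S.E) : S.tpart (v.map Sum.inr) = v := by
  simp [tpart, List.filterMap_map, Function.comp_def]

theorem hpart_nf (u : List S.β) (v : List S.E) :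
    S.hpart (u.map Sum.inl ++ v.map Sum.inr) = u := by
  have : S.hpart (u.map Sum.inl ++ v.map Sum.inr) =
    S.hpart (u.map Sum.inl) ++ S.hpart (v.map Sum.inr) := List.filterMap_append
  rw [this, hpart_inl, hpart_inr, List.append_nil]

theorem tpart_nf (u : List S.β) (v : List S.E) :
    S.tpart (u.map Sum.inl ++ v.map Sum.inr) = v := by
  have : S.tpart (u.map Sum.inl ++ v.map Sum.inr) =
    S.tpart (u.map Sum.inl) ++ S.tpart (v.map Sum.inr) := List.filterMap_append
  rw [this, tpart_inl, tpart_inr, List.nil_append]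

theorem mem_NG {y : List S.X} : y ∈ S.NG ↔ S.hpart y ∈ S.st.N ∧ S.tpart y ∈ S.L ∧
    y = (S.hpart y).map Sum.inl ++ (S.tpart y).map Sum.inr := by
  constructor
  · rintro ⟨_, ⟨u, hu, rfl⟩, _, ⟨v, hv, rfl⟩, rfl⟩
    rw [hpart_nf, tpart_nf]
    exact ⟨hu, hv, rfl⟩
  · rintro ⟨h1, h2, h3⟩
    exact ⟨_, ⟨_, h1, rfl⟩, _, ⟨_, h2, rfl⟩, h3⟩

theorem mk_mem_NG {u : List S.β} {v : List S.E} :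
    u.map Sum.inl ++ v.map Sum.inr ∈ S.NG ↔ u ∈ S.st.N ∧ v ∈ S.L := by
  rw [mem_NG, hpart_nf, tpart_nf]
  simp

theorem exists_nf {y : List S.X} (hy : y ∈ S.NG) :
    ∃ u ∈ S.st.N, ∃ v ∈ S.L, y = u.map Sum.inl ++ v.map Sum.inr := by
  obtain ⟨h1, h2, h3⟩ := S.mem_NG.mp hy
  exact ⟨_, h1, _, h2, h3⟩

theorem val_inr (v : List S.E) : wordVal S.πX (v.map Sum.inr) = S.val v := by
  rw [wordVal_map]; rfl

theorem val_inl (u : List S.β) : wordVal S.πX (u.map Sum.inl) = (wordVal S.πH u : H) := by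
  rw [wordVal_map]
  simp [wordVal, πX, Function.comp_def]

theorem val_nf (u : List S.β) (v : List S.E) :
    wordVal S.πX (u.map Sum.inl ++ v.map Sum.inr) = (wordVal S.πH u : H) * S.val v := by
  rw [wordVal_append, val_inr, val_inl]

theorem nil_mem : ([] : List S.E) ∈ S.L :=
  S.prefL _ (S.rep_mem 1) _ List.nil_prefix

theorem nil_memN : ([] : List S.β) ∈ S.st.N := by
  obtain ⟨w, hw, -⟩ := S.stacking.nf 1
  exact S.stacking.prefixClosed _ hw.1 _ List.nil_prefix

theorem rep_eq_nil {g : G} : S.rep g = [] ↔ g ∈ H := by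
  constructor
  · intro h
    have := S.rep_coset g
    rw [h] at this
    simpa [wordVal_nil] using this
  · intro h
    exact S.rep_unique g [] S.nil_mem (by simpa [wordVal_nil] using h)

theorem tpart_eq_rep {y : List S.X} (hy : y ∈ S.NG) : S.tpart y = S.rep (wordVal S.πX y) := by
  obtain ⟨u, hu, v, hv, rfl⟩ := S.exists_nf hy
  rw [tpart_nf, val_nf]
  refine (S.rep_unique _ v hv ?_).symm
  simp

theorem val_nf_mem_iff {y : List S.X} (hy : y ∈ S.NG) :
    wordVal S.πX y ∈ H ↔ S.tpart y = [] := by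
  rw [S.tpart_eq_rep hy, rep_eq_nil]

theorem rep_left {g h : G} (hh : h ∈ H) : S.rep (h * g) = S.rep g := by
  refine S.rep_unique _ _ (S.rep_mem g) ?_
  rw [mul_assoc]
  exact H.mul_mem hh (S.rep_coset g)

theorem rep_self {v : List S.E} (hv : v ∈ S.L) : S.rep (S.val v) = v :=
  S.rep_unique _ _ hv (by simp)

theorem NG_existsUnique (g : G) : ∃! w, w ∈ S.NG ∧ wordVal S.πX w = g := by
  obtain ⟨u, ⟨hu, huv⟩, huniq⟩ := S.stacking.nf ⟨_, S.rep_coset g⟩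
  refine ⟨u.map Sum.inl ++ (S.rep g).map Sum.inr, ⟨S.mk_mem_NG.mpr ⟨hu, S.rep_mem g⟩, ?_⟩, ?_⟩
  · rw [val_nf, huv]
    simp
  · rintro w ⟨hw, rfl⟩
    have ht := S.tpart_eq_rep hw
    obtain ⟨u', hu', v', hv', rfl⟩ := S.exists_nf hw
    rw [tpart_nf] at ht
    rw [← ht]
    have : u' = u := by
      refine huniq u' ⟨hu', ?_⟩
      apply Subtype.ext
      simp only
      rw [← ht, val_nf]
      simp
    rw [this]

theorem NG_prefix : PrefixClosed S.NG := by
  intro w hw p hp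
  obtain ⟨u, hu, v, hv, rfl⟩ := S.exists_nf hw
  obtain ⟨t, ht⟩ := hp
  rcases List.append_eq_append_iff.mp ht with ⟨a, h1, -⟩ | ⟨c, h1, h2⟩
  · obtain ⟨u1, u2, rfl, rfl, -⟩ := List.map_eq_append_iff.mp h1
    have := S.mk_mem_NG (u := u1) (v := []) |>.mpr
      ⟨S.stacking.prefixClosed _ hu _ (List.prefix_append _ _), S.nil_mem⟩
    simpa using this
  · obtain ⟨v1, v2, rfl, rfl, -⟩ := List.map_eq_append_iff.mp h2
    rw [h1]
    exact S.mk_mem_NG.mpr ⟨hu, S.prefL _ hv _ (List.prefix_append _ _)⟩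

theorem gen_X : IsInvGenSet G S.πX S.invX where
  ne_one := by
    rintro (b | x) h
    · exact S.stacking.gen.ne_one b (Subtype.ext h)
    · exact S.genE.ne_one x h
  inv_invol := by
    rintro (b | x)
    · exact congrArg Sum.inl (S.stacking.gen.inv_invol b)
    · exact congrArg Sum.inr (S.genE.inv_invol x)
  val_inv := by
    rintro (b | x)
    · exact congrArg Subtype.val (S.stacking.gen.val_inv b)
    · exact S.genE.val_inv x
  gen := by
    rw [eq_top_iff, ← S.genE.gen]
    apply Subgroup.closure_mono
    rintro _ ⟨x, rfl⟩
    exact ⟨Sum.inr x, rfl⟩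

/-! ### Properties of the stacking function -/

theorem shift_mem (v : List S.E) (x : S.E) : S.shift v x ∈ H := S.rep_coset _

theorem shift_eq (v : List S.E) (x : S.E) :
    S.val v * S.πE x = S.shift v x * S.val (S.target v x) := by
  simp [shift]

/-- Edges labelled by original generators are good, by the fellow traveler property. -/
theorem good_of_A0 {v : List S.E} (hv : v ∈ S.L) {x : S.E} (hx : x ∈ S.A0) : S.Good v x :=
  S.fellow x hx v hv _ (S.rep_mem _) _ (S.shift_mem v x) (S.shift_eq v x)

theorem val_take_lastStep (v : List S.E) (n : ℕ) (hn : 1 ≤ n) (hv : v.length ≤ n) :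
    v.take (n - 1) ++ (S.lastStep v n).toList = v := by
  obtain ⟨m, rfl⟩ : ∃ m, n = m + 1 := ⟨n - 1, by omega⟩
  have := List.take_add_one (l := v) (i := m)
  rw [List.take_of_length_le hv] at this
  simpa [lastStep] using this.symm

theorem val_take_mul (v : List S.E) (n : ℕ) (hn : 1 ≤ n) (hv : v.length ≤ n) :
    S.val (v.take (n - 1)) * S.oval (S.lastStep v n) = S.val v := by
  rw [oval, val, val, val, ← wordVal_append, S.val_take_lastStep v n hn hv]

theorem time_pos {v : List S.E} {x : S.E} (h : ¬ (v = [] ∧ S.target v x = [])) :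
    1 ≤ S.time v x := by
  rw [time]
  by_contra hc
  apply h
  constructor <;> apply List.length_eq_zero_iff.mp <;> omega

/-- The letter in the middle of a detour has as value the difference of the two words one time
step earlier. -/
theorem mid_eq {v : List S.E} {x : S.E} (h : ¬ (v = [] ∧ S.target v x = [])) :
    S.oval (S.lastStep v (S.time v x)) * S.πE x *
      (S.oval (S.lastStep (S.target v x) (S.time v x)))⁻¹ =
    (S.val (v.take (S.time v x - 1)))⁻¹ * S.shift v x *
      S.val ((S.target v x).take (S.time v x - 1)) := by
  have h1 := S.val_take_mul v _ (S.time_pos h) (le_max_left _ _)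
  have h2 := S.val_take_mul (S.target v x) _ (S.time_pos h) (le_max_right _ _)
  have h3 := S.shift_eq v x
  change S.val (v.take (S.time v x - 1)) * S.oval (S.lastStep v (S.time v x)) = _ at h1
  change S.val ((S.target v x).take (S.time v x - 1)) *
    S.oval (S.lastStep (S.target v x) (S.time v x)) = _ at h2
  rw [← h1, ← h2] at h3
  rw [mul_inv_eq_iff_eq_mul, mul_assoc _ (S.val _) (S.oval _), mul_assoc _ (S.shift v x), ← h3]
  group

theorem val_toList_inv (e : Option S.E) : S.val (e.toList.map S.invE) = (S.oval e)⁻¹ := by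
  cases e with
  | none => simp [oval, wordVal]
  | some a => simp [oval, wordVal, S.genE.val_inv]

theorem psi_val (v : List S.E) (x : S.E) : wordVal S.πX (S.psi v x) = S.πE x := by
  unfold psi
  split_ifs with h1 h2 h3
  · rw [wordVal_singleton]; rfl
  · obtain ⟨rfl, h⟩ := h3
    have : S.πE x ∈ H := by
      have := S.rep_eq_nil.mp h
      simpa [wordVal_nil] using this
    rw [wordVal_map]
    exact S.hword_val _ this
  · rw [val_inr, detour, val, wordVal_append, wordVal_append]
    have hg := h2 (S.time v x - 1)
    rw [← S.mid_eq h3] at hg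
    rw [S.letter_val _ hg]
    have := S.val_toList_inv (S.lastStep v (S.time v x))
    rw [val] at this
    rw [this]
    change _ * (_ * S.oval _) = _
    group
  · rw [val_inr, val, S.aword_val]

theorem phi_val {y : List S.X} (hy : y ∈ S.NG) (a : S.X) :
    wordVal S.πX (S.phi y a) = S.πX a := by
  rcases a with b | x
  · unfold phi
    simp only
    split_ifs with h
    · rw [val_inl, (S.stacking.F1 _ (S.mem_NG.mp hy).1 b).1]; rfl
    · rw [val_inr, val, S.aword_val]; rfl
  · exact S.psi_val _ x

/-- The stacking function has bounded values: there are finitely many letters, and a detour has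
length at most three. -/
theorem phi_length : ∃ K, ∀ y ∈ S.NG, ∀ a, (S.phi y a).length ≤ K := by
  have hb := Fintype.ofFinite S.β
  have hE := Fintype.ofFinite S.E
  have l1 : ∀ e : Option S.E, e.toList.length ≤ 1 := by
    rintro (_ | e) <;> simp
  refine ⟨S.st.K + ∑ b, (S.aword (S.πH b)).length + ∑ x, (S.aword (S.πE x)).length +
    ∑ x, (S.hword (S.πE x)).length + 3, ?_⟩
  rintro y hy (b | x)
  · have h1 := (S.stacking.F1 _ (S.mem_NG.mp hy).1 b).2
    have h2 := Finset.single_le_sum (f := fun b => (S.aword (S.πH b)).length)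
      (fun _ _ => Nat.zero_le _) (Finset.mem_univ b)
    unfold phi
    simp only
    split_ifs
    · rw [List.length_map]; omega
    · rw [List.length_map]; omega
  · have h1 := Finset.single_le_sum (f := fun x => (S.aword (S.πE x)).length)
      (fun _ _ => Nat.zero_le _) (Finset.mem_univ x)
    have h2 := Finset.single_le_sum (f := fun x => (S.hword (S.πE x)).length)
      (fun _ _ => Nat.zero_le _) (Finset.mem_univ x)
    change (S.psi _ x).length ≤ _
    unfold psi
    split_ifs
    · simp
    · rw [List.length_map]; omega
    · rw [List.length_map, detour, List.length_append, List.length_append, List.length_map]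
      have := l1 (S.lastStep (S.tpart y) (S.time (S.tpart y) x))
      have := l1 (S.lastStep (S.target (S.tpart y) x) (S.time (S.tpart y) x))
      have := S.letter_length (S.oval (S.lastStep (S.tpart y) (S.time (S.tpart y) x)) * S.πE x *
        (S.oval (S.lastStep (S.target (S.tpart y) x) (S.time (S.tpart y) x)))⁻¹)
      omega
    · rw [List.length_map]; omega

theorem snoc_inr_mem {y : List S.X} (hy : y ∈ S.NG) (x : S.E) :
    y ++ [Sum.inr x] ∈ S.NG ↔ S.tpart y ++ [x] ∈ S.L := by
  obtain ⟨u, hu, v, hv, rfl⟩ := S.exists_nf hy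
  have : u.map Sum.inl ++ v.map Sum.inr ++ [Sum.inr x] =
      u.map Sum.inl ++ (v ++ [x]).map Sum.inr := by simp
  rw [this, mk_mem_NG, tpart_nf]
  simp [hu]

theorem snoc_inl_mem {y : List S.X} (hy : y ∈ S.NG) (b : S.β) :
    y ++ [Sum.inl b] ∈ S.NG ↔ S.tpart y = [] ∧ S.hpart y ++ [b] ∈ S.st.N := by
  obtain ⟨u, hu, v, hv, rfl⟩ := S.exists_nf hy
  rw [tpart_nf, hpart_nf]
  constructor
  · intro h
    obtain ⟨h1, -, h3⟩ := S.mem_NG.mp h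
    have e1 : S.hpart (u.map Sum.inl ++ v.map Sum.inr ++ [Sum.inl b]) = u ++ [b] := by
      have := List.filterMap_append (l := u.map Sum.inl ++ v.map Sum.inr)
        (l' := [(Sum.inl b : S.X)]) (f := Sum.getLeft?)
      refine this.trans ?_
      have := S.hpart_nf u v
      rw [hpart] at this
      rw [this]; rfl
    have e2 : S.tpart (u.map Sum.inl ++ v.map Sum.inr ++ [Sum.inl b]) = v := by
      have := List.filterMap_append (l := u.map Sum.inl ++ v.map Sum.inr)
        (l' := [(Sum.inl b : S.X)]) (f := Sum.getRight?)
      refine this.trans ?_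
      have := S.tpart_nf u v
      rw [tpart] at this
      rw [this]; simp
    rw [e1] at h1
    rw [e1, e2] at h3
    refine ⟨?_, h1⟩
    rcases List.eq_nil_or_concat v with rfl | ⟨v', c, rfl⟩
    · rfl
    · have := congrArg List.getLast? h3
      rw [List.getLast?_concat, List.concat_eq_append, List.map_append (l₁ := v'), List.map_singleton,
        ← List.append_assoc, List.getLast?_concat] at this
      simp at this
  · rintro ⟨rfl, h⟩
    have := S.mk_mem_NG (u := u ++ [b]) (v := []) |>.mpr ⟨h, S.nil_mem⟩
    simpa using this

theorem ends_inr {y : List S.X} (hy : y ∈ S.NG) (x : S.E) :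
    (∃ y', y = y' ++ [Sum.inr x]) ↔ ∃ v', S.tpart y = v' ++ [x] := by
  obtain ⟨u, hu, v, hv, rfl⟩ := S.exists_nf hy
  rw [tpart_nf]
  constructor
  · rintro ⟨y', h⟩
    rcases List.eq_nil_or_concat v with rfl | ⟨v', c, rfl⟩
    · have := congrArg List.getLast? h
      simp at this
    · have := congrArg List.getLast? h
      simp at this
      exact ⟨v', by rw [this]; simp⟩
  · rintro ⟨v', rfl⟩
    exact ⟨u.map Sum.inl ++ v'.map Sum.inr, by simp⟩

theorem ends_inl {y : List S.X} (hy : y ∈ S.NG) (b : S.β) :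
    (∃ y', y = y' ++ [Sum.inl b]) ↔ S.tpart y = [] ∧ ∃ u', S.hpart y = u' ++ [b] := by
  obtain ⟨u, hu, v, hv, rfl⟩ := S.exists_nf hy
  rw [tpart_nf, hpart_nf]
  constructor
  · rintro ⟨y', h⟩
    rcases List.eq_nil_or_concat v with rfl | ⟨v', c, rfl⟩
    · refine ⟨rfl, ?_⟩
      rcases List.eq_nil_or_concat u with rfl | ⟨u', c, rfl⟩
      · simp at h
      · have := congrArg List.getLast? h
        simp at this
        exact ⟨u', by rw [this]; simp⟩
    · have := congrArg List.getLast? h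
      simp at this
  · rintro ⟨rfl, u', rfl⟩
    exact ⟨u'.map Sum.inl, by simp⟩

theorem degen_iff {y : List S.X} (hy : y ∈ S.NG) (x : S.E) :
    (y ++ [Sum.inr x] ∈ S.NG ∨ ∃ y', y = y' ++ [S.invX (Sum.inr x)]) ↔
      S.Degen (S.tpart y) x := by
  rw [Degen, S.snoc_inr_mem hy, ← S.ends_inr hy]
  rfl

theorem phi_F2 {y : List S.X} (hy : y ∈ S.NG) (a : S.X)
    (h : y ++ [a] ∈ S.NG ∨ ∃ y', y = y' ++ [S.invX a]) : S.phi y a = [a] := by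
  rcases a with b | x
  · have hh : S.tpart y = [] ∧ (S.hpart y ++ [b] ∈ S.st.N ∨ ∃ u', S.hpart y = u' ++ [S.invH b]) := by
      rcases h with h | h
      · have := (S.snoc_inl_mem hy b).mp h
        exact ⟨this.1, Or.inl this.2⟩
      · have := (S.ends_inl hy (S.invH b)).mp h
        exact ⟨this.1, Or.inr this.2⟩
    unfold phi
    simp only
    rw [if_pos hh.1, S.stacking.F2 _ (S.mem_NG.mp hy).1 b hh.2]
    rfl
  · change S.psi _ x = _
    unfold psi
    rw [if_pos ((S.degen_iff hy x).mp h)]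

/-! ### Termination -/

/-- An edge of the Cayley graph of `H` labelled by a letter for `H`. -/
def Base (p : List S.X × S.X) : Prop := S.tpart p.1 = [] ∧ ∃ b, p.2 = Sum.inl b

/-- A good edge labelled by a letter of `E`. -/
def GoodEdge (p : List S.X × S.X) : Prop := ∃ x, p.2 = Sum.inr x ∧ S.Good (S.tpart p.1) x

/-- The travelling time of an edge labelled by a letter of `E` (and `0` for other edges, where it
is not needed). -/
def rank (p : List S.X × S.X) : ℕ :=
  Sum.elim (fun _ => 0) (fun x => S.time (S.tpart p.1) x) p.2

theorem tpart_of_val {y : List S.X} (hy : y ∈ S.NG) {v : List S.E} (hv : v ∈ S.L) {h : G}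
    (hh : h ∈ H) (e : wordVal S.πX y = h * S.val v) : S.tpart y = v := by
  rw [S.tpart_eq_rep hy, e, S.rep_left hh, S.rep_self hv]

theorem val_NG {y : List S.X} (hy : y ∈ S.NG) :
    wordVal S.πX y = (wordVal S.πH (S.hpart y) : H) * S.val (S.tpart y) := by
  conv_lhs => rw [(S.mem_NG.mp hy).2.2]
  rw [val_nf]

theorem target_eq {v w : List S.E} {x : S.E} (hw : w ∈ S.L) {h : G} (hh : h ∈ H)
    (e : S.val v * S.πE x = h * S.val w) : S.target v x = w ∧ S.shift v x = h := by
  have : S.target v x = w := by rw [target, e, S.rep_left hh, S.rep_self hw]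
  refine ⟨this, ?_⟩
  rw [shift, this, e]
  group

/-- Position of a letter in a concatenation of three words of length at most one. -/
theorem split_three {α : Type} {P Q R U U' : List α} {c : α} (hP : P.length ≤ 1)
    (hQ : Q.length ≤ 1) (hR : R.length ≤ 1) (h : P ++ (Q ++ R) = U ++ c :: U') :
    (P = [c] ∧ U = []) ∨ (Q = [c] ∧ U = P) ∨ (R = [c] ∧ U = P ++ Q) := by
  have one : ∀ {A V W : List α}, A.length ≤ 1 → A = V ++ c :: W → A = [c] ∧ V = [] := by
    intro A V W hA e
    have hl := congrArg List.length e
    simp at hl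
    have hV : V = [] := List.length_eq_zero_iff.mp (by omega)
    have hW : W = [] := List.length_eq_zero_iff.mp (by omega)
    subst hV hW
    exact ⟨e, rfl⟩
  -- either the letter lies in the first list, or that list is a prefix of what precedes it
  have split : ∀ {A D V W : List α}, A ++ D = V ++ c :: W →
      (∃ W', A = V ++ c :: W') ∨ ∃ V', V = A ++ V' ∧ D = V' ++ c :: W := by
    intro A D V W e
    rcases List.append_eq_append_iff.mp e with ⟨a, h1, h2⟩ | ⟨a, h1, h2⟩
    · exact Or.inr ⟨a, h1, h2⟩
    · cases a with
      | nil =>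
        right
        refine ⟨[], by simpa using h1.symm, by simpa using h2.symm⟩
      | cons d a =>
        left
        have : c = d := by simpa using (List.cons.inj h2).1
        subst this
        exact ⟨a, h1⟩
  rcases split h with ⟨W', e⟩ | ⟨V', rfl, e⟩
  · exact Or.inl (one hP e)
  · rcases split e with ⟨W', e2⟩ | ⟨V'', rfl, e2⟩
    · obtain ⟨e1, rfl⟩ := one hQ e2
      exact Or.inr (Or.inl ⟨e1, by simp⟩)
    · obtain ⟨e1, rfl⟩ := one hR e2
      exact Or.inr (Or.inr ⟨e1, by simp⟩)

theorem take_mem {v : List S.E} (hv : v ∈ S.L) (n : ℕ) : v.take n ∈ S.L :=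
  S.prefL _ hv _ (List.take_prefix _ _)

/-- The only non-degenerate edge occurring in the detour replacing a good edge is the middle one;
it is again good, and the words at its ends have been shortened by one time step. -/
theorem detour_step {y y1 : List S.X} (hy : y ∈ S.NG) (hy1 : y1 ∈ S.NG) {x x1 : S.E}
    (hg : S.Good (S.tpart y) x) (hnil : ¬ (S.tpart y = [] ∧ S.target (S.tpart y) x = []))
    (hnd : ¬ S.Degen (S.tpart y1) x1) {U U' : List S.E}
    (hU : S.detour x (S.lastStep (S.tpart y) (S.time (S.tpart y) x))
      (S.lastStep (S.target (S.tpart y) x) (S.time (S.tpart y) x)) = U ++ x1 :: U')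
    (hv : wordVal S.πX y1 = wordVal S.πX y * S.val U) :
    S.Good (S.tpart y1) x1 ∧ S.time (S.tpart y1) x1 < S.time (S.tpart y) x := by
  have hmid := S.mid_eq hnil
  have hpos := S.time_pos hnil
  have hvL := (S.mem_NG.mp hy).2.1
  have hval := S.val_NG hy
  have hshift := S.shift_eq (S.tpart y) x
  have hshiftm := S.shift_mem (S.tpart y) x
  have hlen1 : (S.tpart y).length ≤ S.time (S.tpart y) x := le_max_left _ _
  have hlen2 : (S.target (S.tpart y) x).length ≤ S.time (S.tpart y) x := le_max_right _ _
  have hwL : S.target (S.tpart y) x ∈ S.L := S.rep_mem _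
  have hgood : ∀ i, _ ∈ S.F := hg
  set v := S.tpart y
  set w := S.target v x
  set n := S.time v x
  set k := S.shift v x
  set hp : H := wordVal S.πH (S.hpart y)
  have hv1 := S.val_take_mul v n hpos hlen1
  have hw1 := S.val_take_mul w n hpos hlen2
  have hvt := S.val_take_lastStep v n hpos hlen1
  have hwt := S.val_take_lastStep w n hpos hlen2
  have l1 : ∀ e : Option S.E, e.toList.length ≤ 1 := by
    rintro (_ | e) <;> simp
  have hdiff : S.oval (S.lastStep v n) * S.πE x * (S.oval (S.lastStep w n))⁻¹ ∈ S.F := by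
    rw [hmid]; exact hgood _
  rcases split_three (by rw [List.length_map]; exact l1 _) (S.letter_length _) (l1 _) hU with
    ⟨h1, rfl⟩ | ⟨h1, rfl⟩ | ⟨h1, rfl⟩
  · exfalso
    apply hnd
    right
    have ht : S.tpart y1 = v := by
      refine S.tpart_of_val hy1 hvL hp.2 ?_
      have h0 : S.val [] = 1 := wordVal_nil _
      rw [hv, hval, h0, mul_one]
    rw [ht]
    obtain ⟨e, he, he'⟩ := List.map_eq_singleton_iff.mp h1
    refine ⟨v.take (n - 1), ?_⟩
    rw [← he', S.genE.inv_invol, ← he, hvt]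
  · have ht : S.tpart y1 = v.take (n - 1) := by
      refine S.tpart_of_val hy1 (S.take_mem hvL _) hp.2 ?_
      rw [hv, hval, S.val_toList_inv, ← hv1]
      group
    have hx1 : S.πE x1 = (S.val (v.take (n - 1)))⁻¹ * k * S.val (w.take (n - 1)) := by
      rw [← hmid, ← S.letter_val _ hdiff, h1, wordVal_singleton]
    have htar := S.target_eq (v := v.take (n - 1)) (x := x1) (S.take_mem hwL (n - 1)) hshiftm
      (by rw [hx1]; group)
    rw [ht]
    constructor
    · intro i
      rw [htar.1, htar.2, List.take_take, List.take_take]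
      exact hgood _
    · rw [time, htar.1, List.length_take, List.length_take]
      omega
  · exfalso
    apply hnd
    left
    have ht : S.tpart y1 = w.take (n - 1) := by
      refine S.tpart_of_val hy1 (S.take_mem hwL _) (H.mul_mem hp.2 hshiftm) ?_
      have h2 : ∀ P Q, S.val (P ++ Q) = S.val P * S.val Q := wordVal_append _
      have h4 : S.val (S.letter _) = _ := S.letter_val _ hdiff
      rw [hv, hval, h2, h4, S.val_toList_inv]
      have h3 : S.val (w.take (n - 1)) = k⁻¹ * (S.val v * S.πE x) * (S.oval (S.lastStep w n))⁻¹ := by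
        rw [hshift, eq_mul_inv_iff_mul_eq, hw1]
        group
      rw [h3]
      group
    rw [ht, ← h1, hwt]
    exact hwL

/-- One step of the order on non-degenerate edges: edges inside `H` are followed by edges inside
`H`, and any edge is followed either by such an edge or by a good edge, of smaller travelling time
if the first edge was good. -/
theorem edge_step {y y1 : List S.X} {a a1 : S.X} (hy : y ∈ S.NG) (hy1 : y1 ∈ S.NG)
    (hnd : ¬ (y ++ [a] ∈ S.NG ∨ ∃ y', y = y' ++ [S.invX a]))
    (hnd1 : ¬ (y1 ++ [a1] ∈ S.NG ∨ ∃ y', y1 = y' ++ [S.invX a1])) {U U' : List S.X}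
    (hU : S.phi y a = U ++ a1 :: U') (hv : wordVal S.πX y1 = wordVal S.πX (y ++ U)) :
    (S.Base (y, a) → S.Base (y1, a1)) ∧
    (S.Base (y1, a1) ∨ (S.GoodEdge (y1, a1) ∧
      (S.GoodEdge (y, a) → S.rank (y1, a1) < S.rank (y, a)))) := by
  have base : ∀ (u : List S.β), S.tpart y = [] → u.map Sum.inl = U ++ a1 :: U' →
      S.Base (y1, a1) := by
    intro u ht hu
    obtain ⟨u1, u2, -, rfl, h2⟩ := List.map_eq_append_iff.mp hu
    obtain ⟨b, u3, -, hb, -⟩ := List.map_eq_cons_iff.mp h2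
    refine ⟨?_, b, hb.symm⟩
    rw [← S.val_nf_mem_iff hy1, hv, wordVal_append, val_inl]
    exact H.mul_mem ((S.val_nf_mem_iff hy).mpr ht) (Subtype.property _)
  have good : ∀ g, (S.aword g).map Sum.inr = U ++ a1 :: U' → S.GoodEdge (y1, a1) := by
    intro g hu
    obtain ⟨u1, u2, h1, rfl, h2⟩ := List.map_eq_append_iff.mp hu
    obtain ⟨x1, u3, rfl, hb, -⟩ := List.map_eq_cons_iff.mp h2
    refine ⟨x1, hb.symm, S.good_of_A0 (S.mem_NG.mp hy1).2.1 (S.aword_mem g x1 ?_)⟩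
    rw [h1]
    simp
  rcases a with b | x
  · unfold phi at hU
    simp only at hU
    split_ifs at hU with ht
    · have := base _ ht hU
      exact ⟨fun _ => this, Or.inl this⟩
    · refine ⟨fun h => absurd h.1 ht, Or.inr ⟨good _ hU, ?_⟩⟩
      rintro ⟨x, hx, -⟩
      cases hx
  · refine ⟨?_, ?_⟩
    · rintro ⟨-, b, hb⟩
      cases hb
    have hd : ¬ S.Degen (S.tpart y) x := fun h => hnd ((S.degen_iff hy x).mpr h)
    change S.psi _ x = _ at hU
    unfold psi at hU
    rw [if_neg hd] at hU
    split_ifs at hU with hg hn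
    · exact Or.inl (base _ hn.1 hU)
    · right
      obtain ⟨u1, u2, h1, rfl, h2⟩ := List.map_eq_append_iff.mp hU
      obtain ⟨x1, u3, rfl, rfl, -⟩ := List.map_eq_cons_iff.mp h2
      rw [wordVal_append, val_inr] at hv
      have := S.detour_step hy hy1 hg hn
        (fun h => hnd1 ((S.degen_iff hy1 x1).mpr h)) h1 hv
      exact ⟨⟨x1, rfl, this.1⟩, fun _ => this.2⟩
    · right
      refine ⟨good _ hU, ?_⟩
      rintro ⟨x', hx, hg'⟩
      cases hx
      exact absurd hg' hg

theorem phi_F3 : ¬ ∃ seq : ℕ → List S.X × S.X,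
      ∀ i : ℕ, (seq i).1 ∈ S.NG ∧ (seq i).1 ++ [(seq i).2] ∉ S.NG ∧
        (¬ ∃ y', (seq i).1 = y' ++ [S.invX (seq i).2]) ∧
        ∃ u u' : List S.X, S.phi (seq i).1 (seq i).2 = u ++ (seq (i+1)).2 :: u' ∧
          (seq (i+1)).1 ∈ S.NG ∧
          wordVal S.πX ((seq (i+1)).1) = wordVal S.πX ((seq i).1 ++ u) := by
  rintro ⟨seq, hs⟩
  have step : ∀ i, (S.Base (seq i) → S.Base (seq (i+1))) ∧
      (S.Base (seq (i+1)) ∨ (S.GoodEdge (seq (i+1)) ∧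
        (S.GoodEdge (seq i) → S.rank (seq (i+1)) < S.rank (seq i)))) := by
    intro i
    obtain ⟨h1, h2, h3, u, u', h4, h5, h6⟩ := hs i
    obtain ⟨-, h2', h3', -⟩ := hs (i + 1)
    exact S.edge_step h1 h5 (not_or.mpr ⟨h2, h3⟩) (not_or.mpr ⟨h2', h3'⟩) h4 h6
  by_cases hb : ∃ i, S.Base (seq i)
  · -- from some point on the sequence lives in `H`
    obtain ⟨i0, hi0⟩ := hb
    have hall : ∀ j, S.Base (seq (i0 + j)) := by
      intro j
      induction j with
      | zero => exact hi0
      | succ j ih => exact (step _).1 ih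
    choose ht b hbe using hall
    have hval : ∀ j, wordVal S.πX (seq (i0 + j)).1 =
        (wordVal S.πH (S.hpart (seq (i0 + j)).1) : H) := by
      intro j
      rw [S.val_NG (hs _).1, ht j, val, wordVal_nil, mul_one]
    refine S.stacking.F3 ⟨fun j => (S.hpart (seq (i0 + j)).1, b j), ?_⟩
    intro j
    obtain ⟨h1, h2, h3, u, u', h4, h5, h6⟩ := hs (i0 + j)
    have hN := (S.mem_NG.mp h1).1
    have hN' := (S.mem_NG.mp h5).1
    rw [hbe] at h2 h3 h4
    have hb' : (seq (i0 + j + 1)).2 = Sum.inl (b (j + 1)) := hbe (j + 1)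
    have hval' : wordVal S.πX (seq (i0 + j + 1)).1 =
        (wordVal S.πH (S.hpart (seq (i0 + j + 1)).1) : H) := hval (j + 1)
    rw [hb'] at h4
    unfold phi at h4
    simp only [if_pos (ht j)] at h4
    obtain ⟨u1, u2, e1, rfl, e2⟩ := List.map_eq_append_iff.mp h4
    obtain ⟨b', u3, rfl, eb, -⟩ := List.map_eq_cons_iff.mp e2
    obtain rfl := Sum.inl_injective eb
    refine ⟨hN, fun h => h2 ((S.snoc_inl_mem h1 _).mpr ⟨ht j, h⟩),
      fun h => h3 ((S.ends_inl h1 _).mpr ⟨ht j, h⟩), u1, u3, e1, hN', ?_⟩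
    apply Subtype.ext
    simp only
    rw [wordVal_append, hval', hval, val_inl] at h6
    rw [wordVal_append]
    exact h6
  · -- otherwise the travelling times decrease for ever
    push Not at hb
    have hgood : ∀ i, S.GoodEdge (seq (i + 1)) := fun i =>
      ((step i).2.resolve_left (hb _)).1
    have hdec : ∀ i, S.rank (seq (i + 1 + 1)) < S.rank (seq (i + 1)) := fun i =>
      ((step (i + 1)).2.resolve_left (hb _)).2 (hgood i)
    exact not_strictAnti_of_wellFoundedLT (fun i => S.rank (seq (i + 1)))
      (strictAnti_nat_of_succ_lt hdec)


/-! ### Regularity of the stacking function -/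

theorem lastStep_eq {v : List S.E} {n : ℕ} (h : v.length ≤ n) :
    S.lastStep v n = if v.length < n then none else v.getLast? := by
  rw [lastStep]
  split_ifs with h1
  · exact List.getElem?_eq_none (by omega)
  · rw [List.getLast?_eq_getElem?, show n = v.length by omega]

/-- The last step of a word is `e`, where `o` compares lengths and the word has stopped earlier
exactly when `o` equals `dead`. -/
def LastCond (o dead : Ordering) (e : Option S.E) (v : List S.E) : Prop :=
  (o = dead ∧ none = e) ∨ (o ≠ dead ∧ v.getLast? = e)

theorem reg_lastCond (o dead : Ordering) (e : Option S.E) :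
    IsRegularLang {v | S.LastCond o dead e v} :=
  reg_or (reg_const _) (reg_and (reg_const _) (reg_getLast e))

theorem lastStep_source (v w : List S.E) (e : Option S.E) :
    S.lastStep v (max v.length w.length) = e ↔
      S.LastCond (compare w.length v.length) Ordering.gt e v := by
  rw [S.lastStep_eq (le_max_left _ _), LastCond, Nat.compare_eq_gt, Ne, Nat.compare_eq_gt]
  by_cases h : v.length < w.length
  · simp [h]
  · simp [h]

theorem lastStep_target (v w : List S.E) (e : Option S.E) :
    S.lastStep w (max v.length w.length) = e ↔
      S.LastCond (compare w.length v.length) Ordering.lt e w := by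
  rw [S.lastStep_eq (le_max_right _ _), LastCond, Nat.compare_eq_lt, Ne, Nat.compare_eq_lt]
  by_cases h : w.length < v.length
  · simp [h]
  · simp [h]

/-- The words with a good edge labelled `x` and prescribed last steps form a regular language: the
finitely many differences between fellow-travelling words can be tracked by an automaton. -/
theorem reg_good_steps (x : S.E) (e e' : Option S.E) :
    IsRegularLang {v | v ∈ S.L ∧ S.Good v x ∧ S.lastStep v (S.time v x) = e ∧
      S.lastStep (S.target v x) (S.time v x) = e'} := by
  have key := reg_exists (fun o : Ordering => reg_and S.regL (reg_and
    (S.reg_lastCond o Ordering.gt e)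
    (reg_pair S.πE H S.F S.finF (reg_and S.regL (S.reg_lastCond o Ordering.lt e')) o (S.πE x))))
  refine reg_congr key ?_
  intro v
  constructor
  · rintro ⟨hv, hg, h1, h2⟩
    exact ⟨compare (S.target v x).length v.length, hv, (S.lastStep_source _ _ _).mp h1,
      S.target v x, ⟨S.rep_mem _, (S.lastStep_target _ _ _).mp h2⟩, S.shift v x, S.shift_mem v x,
      S.shift_eq v x, rfl, hg⟩
  · rintro ⟨o, hv, h1, w, ⟨hw, h2⟩, h, hh, he, rfl, hg⟩
    obtain ⟨rfl, rfl⟩ := S.target_eq hw hh he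
    exact ⟨hv, hg, (S.lastStep_source _ _ _).mpr h1, (S.lastStep_target _ _ _).mpr h2⟩

theorem reg_good (x : S.E) : IsRegularLang {v | v ∈ S.L ∧ S.Good v x} := by
  refine reg_congr (reg_exists (fun p : Option S.E × Option S.E => S.reg_good_steps x p.1 p.2)) ?_
  intro v
  constructor
  · rintro ⟨hv, hg⟩
    exact ⟨(_, _), hv, hg, rfl, rfl⟩
  · rintro ⟨p, hv, hg, -, -⟩
    exact ⟨hv, hg⟩

theorem reg_degen (x : S.E) : IsRegularLang {v | S.Degen v x} := by
  refine reg_congr (reg_or (reg_quot x S.regL) (reg_getLast (some (S.invE x)))) ?_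
  intro v
  rw [List.getLast?_eq_some_iff]
  rfl

theorem reg_start (x : S.E) : IsRegularLang {v | v = [] ∧ S.target v x = []} := by
  refine reg_congr (reg_and reg_nil (reg_const (S.target [] x = []))) ?_
  rintro v
  constructor <;> · rintro ⟨rfl, h⟩; exact ⟨rfl, h⟩

theorem reg_psi (x : S.E) (z : List S.X) : IsRegularLang {v | v ∈ S.L ∧ S.psi v x = z} := by
  have hdet := reg_exists (fun p : Option S.E × Option S.E =>
    reg_and (S.reg_good_steps x p.1 p.2) (reg_const ((S.detour x p.1 p.2).map Sum.inr = z)))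
  have h1 := reg_ite (S.reg_start x)
    (reg_const ((S.hword (S.πE x)).map Sum.inl = z)) hdet
  have h2 := reg_ite (S.reg_good x) h1 (reg_const ((S.aword (S.πE x)).map Sum.inr = z))
  have h3 := reg_and S.regL (reg_ite (S.reg_degen x) (reg_const ([Sum.inr x] = z)) h2)
  refine reg_congr h3 ?_
  intro v
  refine and_congr_right fun hv => ?_
  unfold psi
  by_cases c1 : S.Degen v x
  · rw [if_pos c1]; simp [c1]
  by_cases c2 : S.Good v x
  · by_cases c3 : v = [] ∧ S.target v x = []
    · rw [if_neg c1, if_pos c2, if_pos c3]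
      constructor
      · exact fun h => Or.inr ⟨c1, Or.inl ⟨⟨hv, c2⟩, Or.inl ⟨c3, h⟩⟩⟩
      · rintro (⟨h, -⟩ | ⟨-, (⟨-, ⟨-, h⟩ | ⟨h, -⟩⟩ | ⟨h, -⟩)⟩)
        exacts [absurd h c1, h, absurd c3 h, absurd ⟨hv, c2⟩ h]
    · rw [if_neg c1, if_pos c2, if_neg c3]
      constructor
      · exact fun h => Or.inr ⟨c1, Or.inl ⟨⟨hv, c2⟩, Or.inr ⟨c3, (_, _), ⟨hv, c2, rfl, rfl⟩, h⟩⟩⟩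
      · rintro (⟨h, -⟩ | ⟨-, (⟨-, ⟨h, -⟩ | ⟨-, ⟨p1, p2⟩, ⟨-, -, h4, h5⟩, h⟩⟩ | ⟨h, -⟩)⟩)
        · exact absurd h c1
        · exact absurd h c3
        · rw [h4, h5]; exact h
        · exact absurd ⟨hv, c2⟩ h
  · rw [if_neg c1, if_neg c2]
    constructor
    · exact fun h => Or.inr ⟨c1, Or.inr ⟨fun h => c2 h.2, h⟩⟩
    · rintro (⟨h, -⟩ | ⟨-, (⟨⟨-, h⟩, -⟩ | ⟨-, h⟩)⟩)
      exacts [absurd h c1, absurd h c2, h]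

/-- The words in which all letters for `H` precede all letters of `E`. -/
theorem reg_shape : IsRegularLang
    {y : List S.X | y = (S.hpart y).map Sum.inl ++ (S.tpart y).map Sum.inr} := by
  have hh : ∀ (y : List S.X) a, S.hpart (y ++ [a]) = S.hpart y ++ S.hpart [a] :=
    fun _ _ => List.filterMap_append
  have ht : ∀ (y : List S.X) a, S.tpart (y ++ [a]) = S.tpart y ++ S.tpart [a] :=
    fun _ _ => List.filterMap_append
  -- appending a letter keeps the shape unless a letter for `H` follows a letter of `E`
  have hstep : ∀ (y : List S.X) a,
      (y ++ [a] = (S.hpart (y ++ [a])).map Sum.inl ++ (S.tpart (y ++ [a])).map Sum.inr) ↔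
      (y = (S.hpart y).map Sum.inl ++ (S.tpart y).map Sum.inr) ∧
        (a.isRight ∨ S.tpart y = []) := by
    intro y a
    rw [hh, ht]
    rcases a with b | x
    · have e1 : S.hpart [Sum.inl b] = [b] := rfl
      have e2 : S.tpart [Sum.inl b] = [] := rfl
      rw [e1, e2, List.append_nil]
      rcases List.eq_nil_or_concat (S.tpart y) with h | ⟨t, c, h⟩
      · rw [h]; simp
      · rw [h]
        constructor
        · intro h
          have := congrArg List.getLast? h
          rw [List.getLast?_concat, List.concat_eq_append, List.map_append (l₁ := t),
            List.map_singleton, ← List.append_assoc, List.getLast?_concat] at this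
          simp at this
        · rintro ⟨-, h⟩
          simp at h
    · have e1 : S.hpart [Sum.inr x] = [] := rfl
      have e2 : S.tpart [Sum.inr x] = [x] := rfl
      rw [e1, e2, List.append_nil, List.map_append, ← List.append_assoc, List.map_singleton,
        List.append_left_inj]
      simp
  refine reg_of_fin (fun y => ((y = (S.hpart y).map Sum.inl ++ (S.tpart y).map Sum.inr : Prop),
    (S.tpart y = [] : Prop))) ?_ ?_
  · intro v v' e hv
    exact (congrArg Prod.fst e).mp hv
  · intro v v' a e
    have e1 := congrArg Prod.fst e
    have e2 := congrArg Prod.snd e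
    simp only at e1 e2
    refine Prod.ext ?_ ?_
    · simp only [hstep]
      rw [e1, e2]
    · simp only [ht, List.append_eq_nil_iff]
      rw [e2]

theorem reg_tpart {R : Set (List S.E)} (h : IsRegularLang R) :
    IsRegularLang {y : List S.X | S.tpart y ∈ R} :=
  reg_filterMap _ h

theorem reg_hpart {R : Set (List S.β)} (h : IsRegularLang R) :
    IsRegularLang {y : List S.X | S.hpart y ∈ R} :=
  reg_filterMap _ h

theorem reg_NG : IsRegularLang S.NG := by
  refine reg_congr (Q := fun y => y ∈ S.NG)
    (reg_and (S.reg_hpart S.auto.1) (reg_and (S.reg_tpart S.regL) S.reg_shape)) ?_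
  intro y
  exact S.mem_NG

/-- The fibres of the stacking function are regular. -/
theorem reg_phi (a : S.X) (z : List S.X) : IsRegularLang {y | y ∈ S.NG ∧ S.phi y a = z} := by
  rcases a with b | x
  · have hbase : IsRegularLang {u | u ∈ S.st.N ∧ (S.st.phi u b).map Sum.inl = z} := by
      by_cases hz : ∃ z' : List S.β, z'.map Sum.inl = z
      · obtain ⟨z', rfl⟩ := hz
        refine reg_congr (reg_section S.auto.2 b z') ?_
        intro u
        constructor
        · rintro ⟨hu, h⟩
          have h := List.map_injective_iff.mpr Sum.inl_injective h
          exact ⟨u, hu, b, by rw [h]⟩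
        · rintro ⟨u', hu, b', h⟩
          simp only [Prod.mk.injEq, List.cons.injEq, and_true] at h
          obtain ⟨rfl, rfl, rfl⟩ := h
          exact ⟨hu, rfl⟩
      · refine reg_congr (reg_const False) ?_
        intro u
        refine ⟨fun h => hz ⟨_, h.2⟩, False.elim⟩
    have h1 := reg_and S.reg_NG (reg_ite (S.reg_tpart reg_nil) (S.reg_hpart hbase)
      (reg_const ((S.aword (S.πH b)).map Sum.inr = z)))
    refine reg_congr h1 ?_
    intro y
    refine and_congr_right fun hy => ?_
    have hN := (S.mem_NG.mp hy).1
    unfold phi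
    simp only [Set.mem_ofPred_eq]
    by_cases c : S.tpart y = []
    · simp [c, hN]
    · simp [c]
  · refine reg_congr (reg_and S.reg_NG (S.reg_tpart (S.reg_psi x z))) ?_
    intro y
    refine and_congr_right fun hy => ?_
    exact ⟨fun h => ⟨(S.mem_NG.mp hy).2.1, h⟩, fun h => h.2⟩

/-! ### The structure on `G` -/

/-- The stacking data on `G` given by the combined data. -/
noncomputable def stG : StackingData S.X :=
  ⟨S.NG, S.phi_length.choose, S.phi⟩

theorem isStacking : IsStacking G S.πX S.invX S.stG where
  gen := S.gen_X
  nf := S.NG_existsUnique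
  prefixClosed := S.NG_prefix
  F1 := fun _ hy a => ⟨S.phi_val hy a, S.phi_length.choose_spec _ hy a⟩
  F2 := fun _ hy a h => S.phi_F2 hy a h
  F3 := S.phi_F3

theorem isAuto : S.stG.IsAuto :=
  ⟨S.reg_NG, sync_of_sections S.NG _ S.phi S.phi_length.choose_spec S.reg_phi⟩

theorem closure_inl : Subgroup.closure (S.πX '' Set.range Sum.inl) = H := by
  have h := congrArg (Subgroup.map H.subtype) S.stacking.gen.gen
  rw [MonoidHom.map_closure, ← MonoidHom.range_eq_map, Subgroup.range_subtype] at h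
  rw [← Set.range_comp] at h ⊢
  exact h

theorem respects : RespectsSubgroup S.πX S.invX S.stG H := by
  refine ⟨Set.range Sum.inl, ?_, ?_, S.closure_inl, List.map Sum.inl '' S.st.N,
    List.map Sum.inr '' S.L, ?_, ?_, ?_, ?_, ?_, rfl, ?_, ?_⟩
  · rintro _ ⟨b, rfl⟩
    exact ⟨S.invH b, rfl⟩
  · rintro _ ⟨b, rfl⟩
    exact (S.πH b).2
  · rintro _ ⟨u, -, rfl⟩ c hc
    obtain ⟨b, -, rfl⟩ := List.mem_map.mp hc
    exact ⟨b, rfl⟩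
  · rintro _ ⟨u, hu, rfl⟩ p ⟨t, ht⟩
    obtain ⟨u1, u2, rfl, rfl, -⟩ := List.map_eq_append_iff.mp ht.symm
    exact ⟨u1, S.stacking.prefixClosed _ hu _ (List.prefix_append _ _), rfl⟩
  · intro h hh
    obtain ⟨u, ⟨hu, huv⟩, huniq⟩ := S.stacking.nf ⟨h, hh⟩
    refine ⟨u.map Sum.inl, ⟨⟨u, hu, rfl⟩, by rw [val_inl, huv]⟩, ?_⟩
    rintro _ ⟨⟨u', hu', rfl⟩, h'⟩
    rw [val_inl] at h'
    rw [huniq u' ⟨hu', Subtype.ext h'⟩]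
  · rintro _ ⟨v, hv, rfl⟩ p ⟨t, ht⟩
    obtain ⟨v1, v2, rfl, rfl, -⟩ := List.map_eq_append_iff.mp ht.symm
    exact ⟨v1, S.prefL _ hv _ (List.prefix_append _ _), rfl⟩
  · intro g
    refine ⟨(S.rep g).map Sum.inr, ⟨⟨_, S.rep_mem g, rfl⟩, ?_⟩, ?_⟩
    · rw [val_inr]
      have := H.inv_mem (S.rep_coset g)
      rwa [mul_inv_rev, inv_inv] at this
    · rintro _ ⟨⟨v, hv, rfl⟩, h⟩
      rw [val_inr] at h
      have := H.inv_mem h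
      rw [mul_inv_rev, inv_inv] at this
      rw [S.rep_unique g v hv this]
  · rintro y hy hyH _ ⟨b, rfl⟩ c hc
    change c ∈ S.phi y (Sum.inl b) at hc
    unfold phi at hc
    simp only [if_pos ((S.val_nf_mem_iff hy).mp hyH)] at hc
    obtain ⟨b', -, rfl⟩ := List.mem_map.mp hc
    exact ⟨b', rfl⟩
  · rintro a y hy y' hy' hn ⟨h, hh, he⟩
    have ht : S.tpart y' = S.tpart y := by
      rw [S.tpart_eq_rep hy', S.tpart_eq_rep hy, he, S.rep_left hh]
    change S.phi y' a = S.phi y a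
    rcases a with b | x
    · have hne : S.tpart y ≠ [] := fun hc => hn ⟨(S.val_nf_mem_iff hy).mpr hc, b, rfl⟩
      unfold phi
      simp only [ht, if_neg hne]
    · change S.psi _ x = S.psi _ x
      rw [ht]

end CosetSetup

/-! ### Building the combined data -/

/-- The elements of `G` represented by words of length at most `K`. -/
def ballSet {G : Type} [Group G] {α : Type} (π : α → G) (K : ℕ) : Set G :=
  {g | ∃ w : List α, w.length ≤ K ∧ wordVal π w = g}

theorem ballSet_finite {G : Type} [Group G] {α : Type} [Finite α] (π : α → G) (K : ℕ) :
    (ballSet π K).Finite := by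
  refine ((List.finite_length_le α K).image (wordVal π)).subset ?_
  rintro _ ⟨w, hw, rfl⟩
  exact ⟨w, hw, rfl⟩

theorem ballSet_inv {G : Type} [Group G] {α : Type} {π : α → G} {inv : α → α}
    (hi : ∀ a, π (inv a) = (π a)⁻¹) {K : ℕ} {g : G} (h : g ∈ ballSet π K) :
    g⁻¹ ∈ ballSet π K := by
  obtain ⟨w, hw, rfl⟩ := h
  exact ⟨w.reverse.map inv, by simpa using hw, wordVal_reverse_inv hi w⟩

theorem wordDist_le {G : Type} [Group G] {α : Type} {π : α → G} {g g' : G} {w : List α}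
    (h : wordVal π w = g⁻¹ * g') : wordDist π g g' ≤ w.length :=
  Nat.sInf_le ⟨w, h, rfl⟩

theorem mem_ballSet_of_wordDist {G : Type} [Group G] {α : Type} {π : α → G} {inv : α → α}
    (hg : IsInvGenSet G π inv) {K : ℕ} {g g' : G} (h : wordDist π g g' ≤ K) :
    g⁻¹ * g' ∈ ballSet π K := by
  obtain ⟨w0, hw0⟩ := exists_word hg (g⁻¹ * g')
  obtain ⟨w, hw, hl⟩ := Nat.sInf_mem
    (s := {n : ℕ | ∃ w : List α, wordVal π w = g⁻¹ * g' ∧ w.length = n}) ⟨_, w0, hw0, rfl⟩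
  exact ⟨w, hl.trans_le h, hw⟩

open Classical in
/-- The generating set of `G` is enlarged by new letters for all nontrivial elements of the ball
whose radius is the fellow traveler constant. -/
theorem exists_setup {G : Type} [Group G] (H : Subgroup G) (hHauto : Autostackable ↥H)
    (hca : ∃ (α : Type) (_ : Fintype α) (π : α → G) (inv : α → α),
      StronglyPrefixClosedCosetAutomatic π inv H) : Nonempty (CosetSetup G H) := by
  obtain ⟨β, hβ, πH, invH, st, hst, hauto⟩ := hHauto
  obtain ⟨α, hα, π, inv, hgen, K, L, hreg, hpre, hrep, hfel⟩ := hca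
  have hF := ballSet_finite π K
  let D : Type := {g : G // g ∈ ballSet π K ∧ g ≠ 1}
  have hD : Finite D := (hF.subset (fun g (hg : g ∈ ballSet π K ∧ g ≠ 1) => hg.1)).to_subtype
  let πE : α ⊕ D → G := Sum.elim π (fun d => d.1)
  let invE : α ⊕ D → α ⊕ D := Sum.map inv
    (fun d => ⟨d.1⁻¹, ballSet_inv hgen.val_inv d.2.1, inv_ne_one.mpr d.2.2⟩)
  have hval : ∀ w : List α, wordVal πE (w.map Sum.inl) = wordVal π w := fun w => wordVal_map _ _ _
  choose rp hrp huniq using hrep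
  have hcoset : ∀ g v, wordVal π v * g⁻¹ ∈ H ↔ g * (wordVal π v)⁻¹ ∈ H := by
    intro g v
    rw [← H.inv_mem_iff, mul_inv_rev, inv_inv]
  choose aw haw using exists_word hgen
  choose hw hhw using exists_word hst.gen
  refine ⟨{
    β := β
    finβ := inferInstance
    πH := πH
    invH := invH
    st := st
    stacking := hst
    auto := hauto
    E := α ⊕ D
    finE := inferInstance
    πE := πE
    invE := invE
    genE := ?_
    L := List.map Sum.inl '' L
    regL := reg_map_inj _ Sum.inl_injective hreg
    prefL := ?_
    rep := fun g => (rp g).map Sum.inl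
    rep_mem := fun g => ⟨_, (hrp g).1, rfl⟩
    rep_coset := ?_
    rep_unique := ?_
    F := ballSet π K
    finF := hF
    letter := fun g => if h : g ∈ ballSet π K ∧ g ≠ 1 then [Sum.inr ⟨g, h⟩] else []
    letter_val := ?_
    letter_length := ?_
    A0 := Set.range Sum.inl
    aword := fun g => (aw g).map Sum.inl
    aword_mem := ?_
    aword_val := fun g => by rw [hval, haw]
    hword := fun g => if h : g ∈ H then hw ⟨g, h⟩ else []
    hword_val := ?_
    fellow := ?_ }⟩
  · refine ⟨?_, ?_, ?_, ?_⟩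
    · rintro (a | d)
      exacts [hgen.ne_one a, d.2.2]
    · rintro (a | d)
      · exact congrArg Sum.inl (hgen.inv_invol a)
      · exact congrArg Sum.inr (Subtype.ext (inv_inv _))
    · rintro (a | d)
      exacts [hgen.val_inv a, rfl]
    · rw [eq_top_iff, ← hgen.gen]
      apply Subgroup.closure_mono
      rintro _ ⟨a, rfl⟩
      exact ⟨Sum.inl a, rfl⟩
  · rintro _ ⟨v, hv, rfl⟩ p ⟨t, ht⟩
    obtain ⟨v1, v2, rfl, rfl, -⟩ := List.map_eq_append_iff.mp ht.symm
    exact ⟨v1, hpre _ hv _ (List.prefix_append _ _), rfl⟩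
  · intro g
    rw [hval, ← hcoset]
    exact (hrp g).2
  · rintro g _ ⟨v, hv, rfl⟩ h
    rw [hval, ← hcoset] at h
    rw [huniq g v ⟨hv, h⟩]
  · intro g hg
    by_cases h1 : g = 1
    · subst h1
      simp [wordVal]
    · rw [dif_pos ⟨hg, h1⟩]
      exact wordVal_singleton _ _
  · intro g
    split_ifs <;> simp
  · intro g a ha
    obtain ⟨c, -, rfl⟩ := List.mem_map.mp ha
    exact ⟨c, rfl⟩
  · intro g hg
    rw [dif_pos hg]
    have h1 := congrArg H.subtype (hhw ⟨g, hg⟩)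
    rw [wordVal, map_list_prod, List.map_map] at h1
    exact h1
  · rintro _ ⟨a, rfl⟩ _ ⟨v, hv, rfl⟩ _ ⟨w, hw', rfl⟩ h hh he i
    rw [hval, hval] at he
    rw [← List.map_take, ← List.map_take, hval, hval, mul_assoc]
    apply mem_ballSet_of_wordDist hgen
    refine hfel v hv w hw' h hh (wordDist_le (w := [a]) ?_) i
    rw [wordVal_singleton, ← he]
    simp [πE]

/-- **Theorem (Brittenham–Hermiller–Susse).** Let `G` be a finitely generated group and
`H` a finitely generated autostackable subgroup of `G`.  If the pair `(G,H)` is strongly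
prefix-closed coset automatic over some finite inverse-closed generating set of `G`,
then `G` is autostackable respecting `H`. -/
theorem strongly_coset_automatic_autostackable_respecting
    {G : Type} [Group G] (H : Subgroup G)
    (hGfg : Group.FG G) (hHfg : H.FG)
    (hHauto : Autostackable ↥H)
    (hca : ∃ (α : Type) (_ : Fintype α) (π : α → G) (inv : α → α),
      StronglyPrefixClosedCosetAutomatic π inv H) :
    AutostackableRespecting G H := by
  obtain ⟨S⟩ := exists_setup H hHauto hca
  exact ⟨S.X, Fintype.ofFinite _, S.πX, S.invX, S.stG, S.isStacking, S.isAuto, S.respects⟩
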